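/- arXiv:1606.09445 — 2 statements merged into one kernel-verified Lean document; each statement's English description precedes it below -/
import Mathlib

section
/- The ℂ-algebra homomorphism φ from the polynomial ring ℂ[u_1,…,u_n,v] to S determined by φ(u_i) = 𝗎_i (1 ≤ i ≤ n) and φ(v) = 𝗏 has image equal to the Veronese subring S^s, and its kernel equals the ideal generated by the 2×2 minors of the 2×(n−1) matrix with first row (u_2, u_3, …, u_n, v^{p_2}) and second row (v^{p_1}, λ_3u_3+v^{p_3}, …, λ_nu_n+v^{p_n}, u_1). Consequently φ induces an isomorphism of ℤ-graded ℂ-algebras R_{p,λ} := ℂ[u_1,…,u_n,v]/(these minors) ≅ S^s, where ℂ[u_1,…,u_n,v] is graded by deg v := 1, deg u_1 := p_2, deg u_2 := p_1, and deg u_i := p_i for 3 ≤ i ≤ n. -/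
set_option synthInstance.maxHeartbeats 1000000
set_option maxHeartbeats 1000000

noncomputable section

open MvPolynomial

def LRel (ι : Type) [DecidableEq ι] (p : ι → ℕ) : AddSubgroup (Option ι → ℤ) :=
  AddSubgroup.closure
    { v | ∃ i : ι, v = (p i : ℤ) • Pi.single (some i) 1 - Pi.single (none : Option ι) 1 }

abbrev LGroup (ι : Type) [DecidableEq ι] (p : ι → ℕ) : Type :=
  (Option ι → ℤ) ⧸ LRel ι p

def egen {ι : Type} [DecidableEq ι] (p : ι → ℕ) (i : ι) : LGroup ι p :=
  QuotientAddGroup.mk (Pi.single (some i) 1)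

def cgen {ι : Type} [DecidableEq ι] (p : ι → ℕ) : LGroup ι p :=
  QuotientAddGroup.mk (Pi.single (none : Option ι) 1)

abbrev BPoly (n : ℕ) : Type := MvPolynomial (Fin n) ℂ

/-- The defining ideal `(xᵢ^{pᵢ} + x₁^{p₁} − λᵢx₂^{p₂} : 3 ≤ i ≤ n)` (0-indexed). -/
def BIdl (n : ℕ) [NeZero n] (p : Fin n → ℕ) (lam : Fin n → ℂ) : Ideal (BPoly n) :=
  Ideal.span { f | ∃ i : Fin n, 2 ≤ (i : ℕ) ∧
    f = X i ^ p i + X 0 ^ p 0 - C (lam i) * X 1 ^ p 1 }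

abbrev BAlg (n : ℕ) [NeZero n] (p : Fin n → ℕ) (lam : Fin n → ℂ) : Type :=
  BPoly n ⧸ BIdl n p lam

/-- The `L`-weight of an exponent vector, `deg xᵢ := eᵢ`. -/
def wtB {n : ℕ} (p : Fin n → ℕ) (m : Fin n →₀ ℕ) : LGroup (Fin n) p :=
  ∑ i : Fin n, m i • egen p i

def polyCompB {n : ℕ} (p : Fin n → ℕ) (y : LGroup (Fin n) p) :
    Submodule ℂ (BPoly n) where
  carrier := { f | ∀ m, coeff m f ≠ 0 → wtB p m = y }
  add_mem' := by
    intro f g hf hg m hm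
    by_cases h : coeff m f = 0
    · refine hg m fun h' => hm ?_
      simp [coeff_add, h, h']
    · exact hf m h
  zero_mem' := by
    intro m hm
    simp at hm
  smul_mem' := by
    intro c f hf m hm
    refine hf m fun h => hm ?_
    simp [coeff_smul, h]

/-- The homogeneous component `S_y ⊆ S` of the `L`-graded algebra `S`. -/
def SCompB (n : ℕ) [NeZero n] (p : Fin n → ℕ) (lam : Fin n → ℂ) (y : LGroup (Fin n) p) :
    Submodule ℂ (BAlg n p lam) :=
  (polyCompB p y).map (Ideal.Quotient.mkₐ ℂ (BIdl n p lam)).toLinearMap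

/-- The Veronese subring `S^x = ⊕_{k ∈ ℤ} S_{kx}`, as a subspace of `S`. -/
def SVerB (n : ℕ) [NeZero n] (p : Fin n → ℕ) (lam : Fin n → ℂ) (x : LGroup (Fin n) p) :
    Submodule ℂ (BAlg n p lam) :=
  ⨆ k : ℤ, SCompB n p lam (k • x)

/-- `S(y)^x = ⊕_{k ∈ ℤ} S_{y + kx}`, as a subspace of `S`. -/
def SShiftB (n : ℕ) [NeZero n] (p : Fin n → ℕ) (lam : Fin n → ℂ)
    (y x : LGroup (Fin n) p) : Submodule ℂ (BAlg n p lam) :=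
  ⨆ k : ℤ, SCompB n p lam (y + k • x)

/-- The polynomials `𝗎₁, …, 𝗎ₙ` (0-indexed). -/
def uPoly (n : ℕ) [NeZero n] (p : Fin n → ℕ) (i : Fin n) : BPoly n :=
  if (i : ℕ) = 0 then
    X 0 ^ (p 0 + p 1) * ∏ j ∈ Finset.univ.filter (fun j : Fin n => 2 ≤ (j : ℕ)), X j ^ p 1
  else if (i : ℕ) = 1 then
    X 1 ^ (p 0 + p 1) * ∏ j ∈ Finset.univ.filter (fun j : Fin n => 2 ≤ (j : ℕ)), X j ^ p 0
  else
    -(X 0 ^ p i * X 1 ^ (p 1 + p i) *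
      ∏ j ∈ Finset.univ.filter (fun j : Fin n => 2 ≤ (j : ℕ) ∧ j ≠ i), X j ^ p i)

/-- The elements `𝗎ᵢ ∈ S`. -/
def uElem (n : ℕ) [NeZero n] (p : Fin n → ℕ) (lam : Fin n → ℂ) (i : Fin n) :
    BAlg n p lam :=
  Ideal.Quotient.mk (BIdl n p lam) (uPoly n p i)

/-- The element `𝗏 = x₁x₂⋯xₙ ∈ S`. -/
def vElem (n : ℕ) [NeZero n] (p : Fin n → ℕ) (lam : Fin n → ℂ) : BAlg n p lam :=
  Ideal.Quotient.mk (BIdl n p lam) (∏ i : Fin n, X i)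

/-- The polynomial ring `ℂ[u₁,…,uₙ,v]`. -/
abbrev UVPoly (n : ℕ) : Type := MvPolynomial (Fin n ⊕ Unit) ℂ

/-- The weighted degree on `ℂ[u₁,…,uₙ,v]`:
`deg v = 1`, `deg u₁ = p₂`, `deg u₂ = p₁`, `deg uᵢ = pᵢ` for `i ≥ 3`. -/
def wtUV {n : ℕ} [NeZero n] (p : Fin n → ℕ) (m : (Fin n ⊕ Unit) →₀ ℕ) : ℕ :=
  m (Sum.inr ()) + ∑ i : Fin n, m (Sum.inl i) *
    (if (i : ℕ) = 0 then p 1 else if (i : ℕ) = 1 then p 0 else p i)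

/-- The weighted-homogeneous component of degree `d` of `ℂ[u₁,…,uₙ,v]`. -/
def UVComp {n : ℕ} [NeZero n] (p : Fin n → ℕ) (d : ℕ) : Submodule ℂ (UVPoly n) where
  carrier := { f | ∀ m, coeff m f ≠ 0 → wtUV p m = d }
  add_mem' := by
    intro f g hf hg m hm
    by_cases h : coeff m f = 0
    · refine hg m fun h' => hm ?_
      simp [coeff_add, h, h']
    · exact hf m h
  zero_mem' := by
    intro m hm
    simp at hm
  smul_mem' := by
    intro c f hf m hm
    refine hf m fun h => hm ?_
    simp [coeff_smul, h]

/-- The set of `2×2` minors of the matrix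
`(u₂, u₃, …, uₙ, v^{p₂} ; v^{p₁}, λ₃u₃+v^{p₃}, …, λₙuₙ+v^{pₙ}, u₁)`. -/
def minorSet (n : ℕ) [NeZero n] (p : Fin n → ℕ) (lam : Fin n → ℂ) : Set (UVPoly n) :=
  {X (Sum.inl 1) * X (Sum.inl 0) - X (Sum.inr ()) ^ (p 0 + p 1)} ∪
  { f | ∃ i : Fin n, 2 ≤ (i : ℕ) ∧
      f = X (Sum.inl 1) * (C (lam i) * X (Sum.inl i) + X (Sum.inr ()) ^ p i) -
        X (Sum.inr ()) ^ p 0 * X (Sum.inl i) } ∪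
  { f | ∃ i : Fin n, 2 ≤ (i : ℕ) ∧
      f = X (Sum.inl i) * X (Sum.inl 0) -
        X (Sum.inr ()) ^ p 1 * (C (lam i) * X (Sum.inl i) + X (Sum.inr ()) ^ p i) } ∪
  { f | ∃ i j : Fin n, 2 ≤ (i : ℕ) ∧ (i : ℕ) < (j : ℕ) ∧
      f = X (Sum.inl i) * (C (lam j) * X (Sum.inl j) + X (Sum.inr ()) ^ p j) -
        X (Sum.inl j) * (C (lam i) * X (Sum.inl i) + X (Sum.inr ()) ^ p i) }

/-!
In `S` the two entries of each column of the matrix have a common factor `w` with quotients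
`x₂^{p₂}` and `x₁^{p₁}`, so all minors vanish there. Modulo the minors, the product of two
distinct `uᵢ`, `uⱼ` is a combination of `1`, `uᵢ`, `uⱼ` over `ℂ[v]`, so the normal forms
`v^a uᵢ^b` span the quotient. Put `t = x₁^{p₁} / x₂^{p₂}` and `z = 𝗏`, and let `j` run over the
exceptional points of the projective line. At a generic point of `S`, the variable belonging to
`j` takes the value `z^{pⱼ} (t - λⱼ)⁻¹`, or `z^{pⱼ} t` when the exceptional point is at
infinity. By uniqueness of partial fractions the images of the normal forms are linearly
independent, which determines the kernel. Finally `S_{d·s}` is a fixed monomial times forms of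
degree `∑ᵢ ⌊d/pᵢ⌋` in `x₁^{p₁}`, `x₂^{p₂}`, so its dimension is at most `∑ᵢ ⌊d/pᵢ⌋ + 1`. This is the
number of normal forms of degree `d`, and hence `φ` is onto `S_{d·s}`.
-/

section NormalForm

variable {ι : Type*}

/-- The family `1, U i, U i ^ 2, …` of powers of single members of `U`; the index `some (i, b)`
stands for `U i ^ (b + 1)`, so that `1` occurs only once. -/
def purePower {M : Type*} [Monoid M] (U : ι → M) (k : Option (ι × ℕ)) : M :=
  k.elim 1 fun q => U q.1 ^ (q.2 + 1)

/-- The degree of `purePower U k` when `U i` has degree `w i`. -/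
def purePowerDegree (w : ι → ℕ) (k : Option (ι × ℕ)) : ℕ :=
  k.elim 0 fun q => w q.1 * (q.2 + 1)

/-- The monomials in `v` and at most one of the variables `U i`. -/
def normalForm {M : Type*} [Monoid M] (v : M) (U : ι → M) (k : ℕ × Option (ι × ℕ)) : M :=
  v ^ k.1 * purePower U k.2

section Map

variable {M N F : Type*} [Monoid M] [Monoid N] [FunLike F M N] [MonoidHomClass F M N]

theorem map_purePower (f : F) (U : ι → M) (k : Option (ι × ℕ)) :
    f (purePower U k) = purePower (f ∘ U) k := by
  cases k <;> simp [purePower]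

theorem map_normalForm (f : F) (v : M) (U : ι → M) (k : ℕ × Option (ι × ℕ)) :
    f (normalForm v U k) = normalForm (f v) (f ∘ U) k := by
  simp [normalForm, map_purePower]

end Map

theorem normalForm_pow_mul {M : Type*} [CommMonoid M] (z : M) (w : ι → ℕ) (r : ι → M)
    (k : ℕ × Option (ι × ℕ)) :
    normalForm z (fun i => z ^ w i * r i) k =
      z ^ (k.1 + purePowerDegree w k.2) * purePower r k.2 := by
  obtain ⟨a, _ | q⟩ := k
  · simp [normalForm, purePower, purePowerDegree]
  · simp only [normalForm, purePower, purePowerDegree, Option.elim_some]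
    rw [mul_pow, ← pow_mul, pow_add z, mul_assoc]

theorem pow_mem_range_purePower {M : Type*} [Monoid M] (U : ι → M) (i : ι) (b : ℕ) :
    U i ^ b ∈ Set.range (purePower U) := by
  cases b with
  | zero => exact ⟨none, by simp [purePower]⟩
  | succ b => exact ⟨some (i, b), rfl⟩

section Span

variable {R A : Type*} [CommSemiring R] [CommSemiring A] [Algebra R A] {U : ι → A}

theorem pow_mul_mem_span_purePower
    (hU : Pairwise fun i j => U i * U j ∈ Submodule.span R {1, U i, U j}) (i j : ι) (b : ℕ) :
    U i ^ b * U j ∈ Submodule.span R (Set.range (purePower U)) := by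
  have hpow (i b) : U i ^ b ∈ Submodule.span R (Set.range (purePower U)) :=
    Submodule.subset_span (pow_mem_range_purePower U i b)
  obtain rfl | hij := eq_or_ne i j
  · simpa only [pow_succ] using hpow i (b + 1)
  induction b with
  | zero => simpa using hpow j 1
  | succ b ih =>
    obtain ⟨α, β, γ, h⟩ := Submodule.mem_span_triple.1 (hU hij)
    have key : U i ^ (b + 1) * U j = α • U i ^ b + β • U i ^ (b + 1) + γ • (U i ^ b * U j) := by
      rw [pow_succ, mul_assoc, ← h]
      simp only [mul_add, mul_smul_comm, mul_one]
    rw [key]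
    exact add_mem (add_mem (Submodule.smul_mem _ _ (hpow i b))
      (Submodule.smul_mem _ _ (hpow i (b + 1)))) (Submodule.smul_mem _ _ ih)

theorem span_purePower_eq_top (hgen : Algebra.adjoin R (Set.range U) = ⊤)
    (hU : Pairwise fun i j => U i * U j ∈ Submodule.span R {1, U i, U j}) :
    Submodule.span R (Set.range (purePower U)) = ⊤ := by
  set M := Submodule.span R (Set.range (purePower U)) with hM
  have one_mem : (1 : A) ∈ M := Submodule.subset_span ⟨none, rfl⟩
  have mul_gen_mem (j : ι) : M ≤ M.comap (LinearMap.mulRight R (U j)) := by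
    rw [hM, Submodule.span_le]
    rintro _ ⟨_ | ⟨i, b⟩, rfl⟩
    · simpa [purePower] using pow_mul_mem_span_purePower hU j j 0
    · exact pow_mul_mem_span_purePower hU i j (b + 1)
  have mul_mem (x : A) (hx : x ∈ Algebra.adjoin R (Set.range U)) : ∀ m ∈ M, m * x ∈ M := by
    induction hx using Algebra.adjoin_induction with
    | mem x hx =>
      obtain ⟨j, rfl⟩ := hx
      exact mul_gen_mem j
    | algebraMap r =>
      intro m hm
      rw [← Algebra.commutes, ← Algebra.smul_def]
      exact M.smul_mem r hm
    | add x y _ _ hx hy =>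
      intro m hm
      rw [mul_add]
      exact add_mem (hx m hm) (hy m hm)
    | mul x y _ _ hx hy =>
      intro m hm
      rw [← mul_assoc]
      exact hy _ (hx m hm)
  refine eq_top_iff.2 fun x _ => ?_
  simpa using mul_mem x (hgen ▸ Algebra.mem_top) 1 one_mem

end Span

open scoped Polynomial Pointwise in
theorem span_normalForm_eq_top {K A : Type*} [CommSemiring K] [CommSemiring A] [Algebra K A]
    {v : A} {U : ι → A} (hgen : Algebra.adjoin K (insert v (Set.range U)) = ⊤)
    (hU : Pairwise fun i j => ∃ a b c : K[X], U i * U j =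
      Polynomial.aeval v a + Polynomial.aeval v b * U i + Polynomial.aeval v c * U j) :
    Submodule.span K (Set.range (normalForm v U)) = ⊤ := by
  let _ : Algebra K[X] A := (Polynomial.aeval v).toAlgebra
  have smul_eq (a : K[X]) (x : A) : a • x = Polynomial.aeval v a * x := Algebra.smul_def a x
  have : IsScalarTower K K[X] A := .of_algebraMap_eq fun c => (Polynomial.aeval_C v c).symm
  have v_eq : v = algebraMap K[X] A Polynomial.X := (Polynomial.aeval_X v).symm
  have hgen' : Algebra.adjoin K[X] (Set.range U) = ⊤ := by
    have hle : Algebra.adjoin K (insert v (Set.range U)) ≤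
        (Algebra.adjoin K[X] (Set.range U)).restrictScalars K := by
      refine Algebra.adjoin_le (Set.insert_subset ?_ Algebra.subset_adjoin)
      rw [v_eq]
      exact (Algebra.adjoin K[X] (Set.range U)).algebraMap_mem _
    exact eq_top_iff.2 fun x _ => hle (hgen ▸ Algebra.mem_top)
  have hspan : Submodule.span K[X] (Set.range (purePower U)) = ⊤ :=
    span_purePower_eq_top hgen' fun i j hij => by
      obtain ⟨a, b, c, h⟩ := hU hij
      exact Submodule.mem_span_triple.2 ⟨a, b, c, by simp only [smul_eq, h, mul_one]⟩
  have hrange : Set.range (normalForm v U) =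
      (Set.range fun a : ℕ => (Polynomial.X : K[X]) ^ a) • Set.range (purePower U) := by
    rw [Set.range_smul_range]
    congr with k
    simp [smul_eq, normalForm]
  have hX : Submodule.span K (Set.range fun a : ℕ => (Polynomial.X : K[X]) ^ a) = ⊤ := by
    simpa only [Polynomial.coe_basisMonomials, Polynomial.monomial_one_right_eq_X_pow] using
      (Polynomial.basisMonomials K).span_eq
  rw [hrange, Submodule.span_smul_of_span_eq_top hX, hspan, Submodule.restrictScalars_top]

end NormalForm

section PartialFractions

variable {K E ι : Type*} [Field K] [Field E] [Algebra K E] {t : E} {μ : ι → K}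

theorem linearIndependent_pow_of_transcendental (ht : Transcendental K t) :
    LinearIndependent K fun m : ℕ => t ^ m := by
  have h := (Polynomial.basisMonomials K).linearIndependent.map' (Polynomial.aeval t).toLinearMap
    (LinearMap.ker_eq_bot.2 (transcendental_iff_injective.1 ht))
  simpa [Function.comp_def] using h

theorem eq_zero_of_sum_pow_add_sum_sub_inv_pow_eq_zero (ht : Transcendental K t)
    (hμ : Function.Injective μ) {N M : ℕ} {s : Finset ι} {a : ℕ → K} {c : ι → ℕ → K}
    (h : ∑ m ∈ Finset.range N, a m • t ^ m +
      ∑ i ∈ s, ∑ b ∈ Finset.range M, c i b • (t - algebraMap K E (μ i))⁻¹ ^ (b + 1) = 0) :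
    (∀ m < N, a m = 0) ∧ ∀ i ∈ s, ∀ b < M, c i b = 0 := by
  classical
  let _ : Algebra (Polynomial K) E := (Polynomial.aeval t).toAlgebra
  have algebraMap_eq (f : Polynomial K) : algebraMap (Polynomial K) E f = Polynomial.aeval t f :=
    rfl
  have : FaithfulSMul (Polynomial K) E :=
    (faithfulSMul_iff_algebraMap_injective _ E).2 (transcendental_iff_injective.1 ht)
  have sub_ne_zero (i : ι) : t - algebraMap K E (μ i) ≠ 0 := fun h =>
    ht (sub_eq_zero.1 h ▸ isAlgebraic_algebraMap (μ i))
  obtain ⟨hq, hr⟩ := Polynomial.quo_add_sum_rem_mul_pow_inverse_unique (K := E)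
    (s := s) (n := fun _ => M) (q₂ := 0) (r₂ := 0)
    (g := fun i => Polynomial.X - Polynomial.C (μ i))
    (gi := fun i => (t - algebraMap K E (μ i))⁻¹)
    (q₁ := ∑ m ∈ Finset.range N, Polynomial.C (a m) * Polynomial.X ^ m)
    (r₁ := fun i b => Polynomial.C (c i b))
    (fun i _ => Polynomial.monic_X_sub_C _)
    (fun i _ j _ hij => Polynomial.pairwise_coprime_X_sub_C hμ hij)
    (fun i _ => by simp [algebraMap_eq, inv_mul_cancel₀ (sub_ne_zero i)])
    (fun i _ _ => by
      rw [Polynomial.degree_X_sub_C]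
      exact Polynomial.degree_C_le.trans_lt zero_lt_one)
    (fun i _ _ => by simp)
    (by simpa [algebraMap_eq, Algebra.smul_def, Finset.sum_range] using h)
  refine ⟨fun m hm => ?_, fun i hi b hb => by simpa using congr_fun (hr i hi) ⟨b, hb⟩⟩
  simpa [Polynomial.finsetSum_coeff, Polynomial.coeff_C_mul_X_pow, hm] using
    congrArg (Polynomial.coeff · m) hq

theorem linearIndependent_pow_sumElim_sub_inv_pow (ht : Transcendental K t)
    (hμ : Function.Injective μ) :
    LinearIndependent K (Sum.elim (fun m : ℕ => t ^ m)
      fun k : ι × ℕ => (t - algebraMap K E (μ k.1))⁻¹ ^ (k.2 + 1)) := by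
  classical
  refine linearIndependent_iff''.2 fun s c hc hsum => ?_
  obtain ⟨N, hN⟩ := s.toLeft.exists_nat_subset_range
  obtain ⟨M, hM⟩ := (s.toRight.image Prod.snd).exists_nat_subset_range
  have hs : s ⊆ (Finset.range N).disjSum (s.toRight.image Prod.fst ×ˢ Finset.range M) := by
    rintro (m | k) h
    · exact Finset.inl_mem_disjSum.2 (hN (Finset.mem_toLeft.2 h))
    · have hk := Finset.mem_toRight.2 h
      exact Finset.inr_mem_disjSum.2 (Finset.mem_product.2
        ⟨Finset.mem_image_of_mem _ hk, hM (Finset.mem_image_of_mem _ hk)⟩)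
  rw [Finset.sum_subset hs fun k _ hk => by rw [hc k hk, zero_smul], Finset.sum_disjSum,
    Finset.sum_product] at hsum
  obtain ⟨hpow, hinv⟩ := eq_zero_of_sum_pow_add_sum_sub_inv_pow_eq_zero ht hμ
    (a := fun m => c (.inl m)) (c := fun i b => c (.inr (i, b))) hsum
  intro k
  by_cases hk : k ∈ s
  · obtain m | ⟨i, b⟩ := k
    · exact hpow m (Finset.mem_range.1 (Finset.inl_mem_disjSum.1 (hs hk)))
    · obtain ⟨hi, hb⟩ := Finset.mem_product.1 (Finset.inr_mem_disjSum.1 (hs hk))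
      exact hinv i hi b (Finset.mem_range.1 hb)
  · exact hc k hk

theorem linearIndependent_purePower {i₀ : ι} (ht : Transcendental K t)
    (hμ : Set.InjOn μ {i₀}ᶜ) {r : ι → E} (hr₀ : r i₀ = t)
    (hr : ∀ i ≠ i₀, r i = (t - algebraMap K E (μ i))⁻¹) :
    LinearIndependent K (purePower r) := by
  classical
  let e (k : Option (ι × ℕ)) : ℕ ⊕ ({i₀}ᶜ : Set ι) × ℕ :=
    k.elim (.inl 0) fun q => if h : q.1 = i₀ then .inl (q.2 + 1) else .inr (⟨q.1, h⟩, q.2)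
  have he : Function.Injective e := by
    rintro (_ | ⟨i, a⟩) (_ | ⟨j, b⟩) h <;> grind
  convert (linearIndependent_pow_sumElim_sub_inv_pow ht hμ.injective).comp e he using 1
  ext (_ | ⟨i, b⟩)
  · simp [e, purePower]
  · by_cases hi : i = i₀ <;> simp [e, purePower, hi, hr₀, hr]

end PartialFractions

theorem linearIndependent_normalForm {F K L ι : Type*} [Field F] [Field K] [Field L] [Algebra F K]
    [Algebra K L] [Algebra F L] [IsScalarTower F K L] {t : K} {z : L} {i₀ : ι} {μ : ι → F}
    (ht : Transcendental F t) (hz : Transcendental K z) (hμ : Set.InjOn μ {i₀}ᶜ)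
    {r : ι → K} (hr₀ : r i₀ = t) (hr : ∀ i ≠ i₀, r i = (t - algebraMap F K (μ i))⁻¹) (w : ι → ℕ) :
    LinearIndependent F (normalForm z fun i => z ^ w i * algebraMap K L (r i)) := by
  have hli := linearIndependent_smul (linearIndependent_purePower ht hμ hr₀ hr)
    (linearIndependent_pow_of_transcendental hz)
  convert hli.comp (fun k : ℕ × Option (ι × ℕ) => (k.2, k.1 + purePowerDegree w k.2)) ?_ using 1
  · ext k
    simp [normalForm_pow_mul, map_purePower, Algebra.smul_def, mul_comm, Function.comp_def]
  · rintro ⟨a, κ⟩ ⟨b, κ'⟩ h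
    grind

theorem exists_pow_eq_mul_and_prod_eq {L ι : Type*} [Field L] [IsAlgClosed L] [Fintype ι]
    [Nonempty ι] {p : ι → ℕ} (hp : ∀ i, 0 < p i) {q : ι → L} (hq : ∀ i, q i ≠ 0) (z : L) :
    ∃ (x : ι → L) (y : L), (∀ i, x i ^ p i = q i * y) ∧ ∏ i, x i = z := by
  choose ρ hρ using fun i => IsAlgClosed.exists_pow_nat_eq (q i) (hp i)
  have hρ_prod : ∏ i, ρ i ≠ 0 :=
    Finset.prod_ne_zero_iff.2 fun i _ => ne_zero_pow (hp i).ne' (hρ i ▸ hq i)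
  have hdvd (i : ι) : p i ∣ ∏ j, p j := Finset.dvd_prod_of_mem p (Finset.mem_univ i)
  have hpos : 0 < ∏ j, p j := Finset.prod_pos fun i _ => hp i
  have hsum : 0 < ∑ i, (∏ j, p j) / p i :=
    Finset.sum_pos (fun i _ => Nat.div_pos (Nat.le_of_dvd hpos (hdvd i)) (hp i))
      Finset.univ_nonempty
  obtain ⟨s, hs⟩ := IsAlgClosed.exists_pow_nat_eq (z / ∏ i, ρ i) hsum
  refine ⟨fun i => ρ i * s ^ ((∏ j, p j) / p i), s ^ ∏ j, p j, fun i => ?_, ?_⟩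
  · rw [mul_pow, hρ, ← pow_mul, Nat.div_mul_cancel (hdvd i)]
  · rw [Finset.prod_mul_distrib, Finset.prod_pow_eq_pow_sum, hs, mul_div_cancel₀ _ hρ_prod]

open scoped Pointwise in
theorem pair_pow_subset_image_antidiagonal {M : Type*} [CommMonoid M] (x y : M) (m : ℕ) :
    ({x, y} : Set M) ^ m ⊆ (fun k : ℕ × ℕ => x ^ k.1 * y ^ k.2) ''
      (Finset.HasAntidiagonal.antidiagonal m : Finset (ℕ × ℕ)) := by
  induction m with
  | zero => simp
  | succ m ih =>
    rw [pow_succ]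
    rintro _ ⟨_, ha, _, rfl | rfl, rfl⟩ <;> obtain ⟨⟨b, c⟩, hk, rfl⟩ := ih ha <;>
      rw [Finset.mem_coe, Finset.HasAntidiagonal.mem_antidiagonal] at hk
    · exact ⟨(b + 1, c), by simp; omega, by simp only [pow_succ, mul_right_comm]⟩
    · exact ⟨(b, c + 1), by simp; omega, by simp only [pow_succ, mul_assoc]⟩

theorem finrank_span_pair_pow_le {K A : Type*} [Field K] [CommRing A] [Algebra K A]
    (x y : A) (m : ℕ) : Module.finrank K ↥(Submodule.span K {x, y} ^ m) ≤ m + 1 := by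
  classical
  set s := (Finset.HasAntidiagonal.antidiagonal m).image fun k : ℕ × ℕ => x ^ k.1 * y ^ k.2
  calc Module.finrank K ↥(Submodule.span K {x, y} ^ m)
      ≤ Module.finrank K ↥(Submodule.span K (s : Set A)) := by
        rw [Submodule.span_pow]
        refine Submodule.finrank_mono (Submodule.span_mono ?_)
        simpa [s] using pair_pow_subset_image_antidiagonal x y m
    _ ≤ s.card := finrank_span_finset_le_card s
    _ ≤ m + 1 := Finset.card_image_le.trans (Finset.Nat.card_antidiagonal m).le

section Variables

variable {n : ℕ}

/-- `(x₁⋯xₙ)^{pⱼ}` with its factor `xⱼ^{pⱼ}` removed. -/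
def cofactor (p : Fin n → ℕ) (j : Fin n) : BPoly n :=
  ∏ l ∈ Finset.univ.erase j, X l ^ p j

theorem prod_X_pow_eq_mul_cofactor (p : Fin n → ℕ) (j : Fin n) :
    (∏ i, X i : BPoly n) ^ p j = X j ^ p j * cofactor p j := by
  rw [cofactor, Finset.mul_prod_erase _ (fun l => X l ^ p j) (Finset.mem_univ j), Finset.prod_pow]

variable [NeZero n]

theorem val_fin_one (hn : 2 ≤ n) : ((1 : Fin n) : ℕ) = 1 := by
  rw [Fin.val_one', Nat.mod_eq_of_lt hn]

theorem two_le_val_iff (hn : 2 ≤ n) {i : Fin n} : 2 ≤ (i : ℕ) ↔ i ≠ 0 ∧ i ≠ 1 := by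
  simp only [ne_eq, Fin.ext_iff, Fin.val_zero, val_fin_one hn]
  omega

theorem zero_ne_fin_one (hn : 2 ≤ n) : (0 : Fin n) ≠ 1 := by
  rw [ne_eq, Fin.ext_iff, val_fin_one hn, Fin.val_zero]
  exact zero_ne_one

theorem uPoly_swap (hn : 2 ≤ n) (p : Fin n → ℕ) (j : Fin n) :
    uPoly n p (Equiv.swap 0 1 j) =
      (if j = 0 then X 1 ^ p 1 else if j = 1 then X 0 ^ p 0 else -X 1 ^ p 1) * cofactor p j := by
  have h1 := val_fin_one hn
  have h01 := zero_ne_fin_one hn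
  obtain rfl | h0 := eq_or_ne j 0
  · have : Finset.univ.erase 0 = insert 1 (Finset.univ.filter fun l : Fin n => 2 ≤ (l : ℕ)) := by
      ext l
      simp only [Finset.mem_erase, Finset.mem_insert, Finset.mem_filter_univ, two_le_val_iff hn]
      grind
    rw [Equiv.swap_apply_left, uPoly, if_neg (by omega), if_pos h1, if_pos rfl, cofactor, this,
      Finset.prod_insert (by simp [two_le_val_iff hn])]
    ring
  obtain rfl | hj1 := eq_or_ne j 1
  · have : Finset.univ.erase 1 = insert 0 (Finset.univ.filter fun l : Fin n => 2 ≤ (l : ℕ)) := by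
      ext l
      simp only [Finset.mem_erase, Finset.mem_insert, Finset.mem_filter_univ, two_le_val_iff hn]
      grind
    rw [Equiv.swap_apply_right, uPoly, if_pos (by simp), if_neg h0, if_pos rfl, cofactor, this,
      Finset.prod_insert (by simp)]
    ring
  · have : Finset.univ.erase j = insert 0 (insert 1
        (Finset.univ.filter fun l : Fin n => 2 ≤ (l : ℕ) ∧ l ≠ j)) := by
      ext l
      simp only [Finset.mem_erase, Finset.mem_insert, Finset.mem_filter_univ, two_le_val_iff hn]
      grind
    have hj := (two_le_val_iff hn).2 ⟨h0, hj1⟩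
    rw [Equiv.swap_apply_of_ne_of_ne h0 hj1, cofactor, this, Finset.prod_insert (by simp [h01]),
      Finset.prod_insert (by simp [two_le_val_iff hn]), uPoly, if_neg (by omega),
      if_neg (by omega), if_neg h0, if_neg hj1]
    ring

/-- The map `uᵢ ↦ 𝗎ᵢ`, `v ↦ 𝗏`. -/
abbrev veroneseMap (n : ℕ) [NeZero n] (p : Fin n → ℕ) (lam : Fin n → ℂ) :
    UVPoly n →ₐ[ℂ] BAlg n p lam :=
  aeval (Sum.elim (uElem n p lam) fun _ => vElem n p lam)

/-- The `uᵢ` reindexed by exchanging `u₁` and `u₂`: with this numbering `poleVar j` has degree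
`p j` and its image has its pole at the `j`-th exceptional point of the projective line. -/
def poleVar (j : Fin n) : UVPoly n :=
  X (Sum.inl (Equiv.swap 0 1 j))

/-- The value of `t = x₁^{p₁} / x₂^{p₂}` at the `j`-th exceptional point. The point `j = 1`
(0-indexed) is at infinity, and the value given there is irrelevant. -/
def pole (lam : Fin n → ℂ) : Fin n → ℂ :=
  Function.update lam 0 0

/-- The first row of the matrix; its columns are indexed by the exceptional points. -/
def topRow (p : Fin n → ℕ) (j : Fin n) : UVPoly n :=
  if j = 1 then X (Sum.inr ()) ^ p 1 else poleVar j

/-- The second row of the matrix. -/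
def bottomRow (p : Fin n → ℕ) (lam : Fin n → ℂ) (j : Fin n) : UVPoly n :=
  if j = 1 then poleVar 1 else C (pole lam j) * poleVar j + X (Sum.inr ()) ^ p j

theorem injOn_pole (hn : 2 ≤ n) {lam : Fin n → ℂ}
    (hlam0 : ∀ i : Fin n, 2 ≤ (i : ℕ) → lam i ≠ 0)
    (hlamd : ∀ i j : Fin n, 2 ≤ (i : ℕ) → 2 ≤ (j : ℕ) → i ≠ j → lam i ≠ lam j) :
    Set.InjOn (pole lam) {1}ᶜ := by
  simp only [two_le_val_iff hn] at hlam0 hlamd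
  intro i hi j hj h
  simp only [Set.mem_compl_iff, Set.mem_singleton_iff, pole, Function.update_apply] at hi hj h
  grind

theorem mk_X_pow_eq (p : Fin n → ℕ) (lam : Fin n → ℂ) {j : Fin n} (hj : 2 ≤ (j : ℕ)) :
    (Ideal.Quotient.mk (BIdl n p lam) (X j ^ p j) : BAlg n p lam) =
      Ideal.Quotient.mk _ (C (lam j) * X 1 ^ p 1 - X 0 ^ p 0) :=
  Ideal.Quotient.eq.2 (Ideal.subset_span ⟨j, hj, by ring⟩)

theorem exists_veroneseMap_rows_eq (hn : 2 ≤ n) (p : Fin n → ℕ) (lam : Fin n → ℂ) (j : Fin n) :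
    ∃ w, veroneseMap n p lam (topRow p j) = w * Ideal.Quotient.mk _ (X 1 ^ p 1) ∧
      veroneseMap n p lam (bottomRow p lam j) = w * Ideal.Quotient.mk _ (X 0 ^ p 0) := by
  have hU : veroneseMap n p lam (poleVar j) =
      Ideal.Quotient.mk _ (uPoly n p (Equiv.swap 0 1 j)) := aeval_X _ _
  have hv : veroneseMap n p lam (X (Sum.inr ()) ^ p j) =
      Ideal.Quotient.mk _ (X j ^ p j * cofactor p j) := by
    rw [map_pow, aeval_X, ← prod_X_pow_eq_mul_cofactor, map_pow]
    rfl
  rw [uPoly_swap hn] at hU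
  obtain rfl | hj1 := eq_or_ne j 1
  · refine ⟨Ideal.Quotient.mk _ (cofactor p 1), ?_, ?_⟩
    · rw [topRow, if_pos rfl, hv, mul_comm, map_mul]
    · rw [bottomRow, if_pos rfl, hU, if_neg (zero_ne_fin_one hn).symm, if_pos rfl, mul_comm,
        map_mul]
  obtain rfl | hj0 := eq_or_ne j 0
  · refine ⟨Ideal.Quotient.mk _ (cofactor p 0), ?_, ?_⟩
    · rw [topRow, if_neg hj1, hU, if_pos rfl, mul_comm, map_mul]
    · rw [bottomRow, if_neg hj1, pole, Function.update_self, C_0, zero_mul, zero_add, hv, mul_comm,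
        map_mul]
  · rw [if_neg hj0, if_neg hj1] at hU
    refine ⟨-Ideal.Quotient.mk _ (cofactor p j), ?_, ?_⟩
    · rw [topRow, if_neg hj1, hU, map_mul, map_neg]
      ring
    · rw [bottomRow, if_neg hj1, pole, Function.update_of_ne hj0, map_add, hv, map_mul _ (C _), hU,
        map_mul _ (X j ^ p j), mk_X_pow_eq p lam ((two_le_val_iff hn).2 ⟨hj0, hj1⟩),
        MvPolynomial.algHom_C]
      simp only [map_mul, map_sub, map_neg]
      rw [IsScalarTower.algebraMap_apply ℂ (BPoly n) (BAlg n p lam)]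
      simp only [algebraMap_eq, Ideal.Quotient.algebraMap_eq]
      ring

end Variables

section Minors

variable {n : ℕ} [NeZero n]

/-- The `2 × 2` minor of the matrix on the columns `j` and `k`. -/
def minor (p : Fin n → ℕ) (lam : Fin n → ℂ) (j k : Fin n) : UVPoly n :=
  topRow p j * bottomRow p lam k - topRow p k * bottomRow p lam j

theorem topRow_one (p : Fin n → ℕ) : topRow p 1 = X (Sum.inr ()) ^ p 1 := if_pos rfl

theorem bottomRow_one (p : Fin n → ℕ) (lam : Fin n → ℂ) :
    bottomRow p lam 1 = X (Sum.inl 0) := by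
  rw [bottomRow, if_pos rfl, poleVar, Equiv.swap_apply_right]

theorem topRow_zero (hn : 2 ≤ n) (p : Fin n → ℕ) : topRow p 0 = X (Sum.inl 1) := by
  rw [topRow, if_neg (zero_ne_fin_one hn), poleVar, Equiv.swap_apply_left]

theorem bottomRow_zero (hn : 2 ≤ n) (p : Fin n → ℕ) (lam : Fin n → ℂ) :
    bottomRow p lam 0 = X (Sum.inr ()) ^ p 0 := by
  rw [bottomRow, if_neg (zero_ne_fin_one hn), pole, Function.update_self, C_0, zero_mul, zero_add]

theorem topRow_of_two_le (hn : 2 ≤ n) (p : Fin n → ℕ) {j : Fin n} (hj : 2 ≤ (j : ℕ)) :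
    topRow p j = X (Sum.inl j) := by
  obtain ⟨h0, h1⟩ := (two_le_val_iff hn).1 hj
  rw [topRow, if_neg h1, poleVar, Equiv.swap_apply_of_ne_of_ne h0 h1]

theorem bottomRow_of_two_le (hn : 2 ≤ n) (p : Fin n → ℕ) (lam : Fin n → ℂ) {j : Fin n}
    (hj : 2 ≤ (j : ℕ)) :
    bottomRow p lam j = C (lam j) * X (Sum.inl j) + X (Sum.inr ()) ^ p j := by
  obtain ⟨h0, h1⟩ := (two_le_val_iff hn).1 hj
  rw [bottomRow, if_neg h1, pole, Function.update_of_ne h0, poleVar,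
    Equiv.swap_apply_of_ne_of_ne h0 h1]

theorem minor_mem_minorSet (hn : 2 ≤ n) (p : Fin n → ℕ) (lam : Fin n → ℂ) {j k : Fin n}
    (hj : j ≠ 1) (hjk : k = 1 ∨ j < k) : minor p lam j k ∈ minorSet n p lam := by
  have hj : j = 0 ∨ 2 ≤ (j : ℕ) := by have := two_le_val_iff hn (i := j); tauto
  have hk : k = 1 ∨ 2 ≤ (k : ℕ) := by
    have := two_le_val_iff hn (i := k)
    have : k ≠ 1 → k ≠ 0 := fun hk1 hk0 => Fin.not_lt_zero j (hk0 ▸ hjk.resolve_left hk1)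
    tauto
  rcases hj with rfl | hj <;> rcases hk with rfl | hk
  · refine .inl (.inl (.inl ?_))
    rw [minor, topRow_zero hn, topRow_one, bottomRow_zero hn, bottomRow_one,
      Set.mem_singleton_iff]
    ring
  · refine .inl (.inl (.inr ⟨k, hk, ?_⟩))
    rw [minor, topRow_zero hn, bottomRow_zero hn, topRow_of_two_le hn p hk,
      bottomRow_of_two_le hn p lam hk]
    ring
  · refine .inl (.inr ⟨j, hj, ?_⟩)
    rw [minor, topRow_one, bottomRow_one, topRow_of_two_le hn p hj,
      bottomRow_of_two_le hn p lam hj]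
  · refine .inr ⟨j, k, hj, hjk.resolve_left ((two_le_val_iff hn).1 hk).2, ?_⟩
    rw [minor, topRow_of_two_le hn p hj, bottomRow_of_two_le hn p lam hj,
      topRow_of_two_le hn p hk, bottomRow_of_two_le hn p lam hk]

theorem exists_minor_eq_of_mem_minorSet (hn : 2 ≤ n) {p : Fin n → ℕ} {lam : Fin n → ℂ}
    {f : UVPoly n} (hf : f ∈ minorSet n p lam) : ∃ j k, minor p lam j k = f := by
  obtain ((rfl | ⟨i, hi, rfl⟩) | ⟨i, hi, rfl⟩) | ⟨i, j, hi, hij, rfl⟩ := hf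
  · refine ⟨0, 1, ?_⟩
    rw [minor, topRow_zero hn, topRow_one, bottomRow_zero hn, bottomRow_one]
    ring
  · refine ⟨0, i, ?_⟩
    rw [minor, topRow_zero hn, bottomRow_zero hn, topRow_of_two_le hn p hi,
      bottomRow_of_two_le hn p lam hi]
    ring
  · refine ⟨i, 1, ?_⟩
    rw [minor, topRow_one, bottomRow_one, topRow_of_two_le hn p hi,
      bottomRow_of_two_le hn p lam hi]
  · refine ⟨i, j, ?_⟩
    have hj := hi.trans hij.le
    rw [minor, topRow_of_two_le hn p hi, bottomRow_of_two_le hn p lam hi,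
      topRow_of_two_le hn p hj, bottomRow_of_two_le hn p lam hj]

theorem span_minorSet (hn : 2 ≤ n) (p : Fin n → ℕ) (lam : Fin n → ℂ) :
    Ideal.span (minorSet n p lam) =
      Ideal.span (Set.range fun jk : Fin n × Fin n => minor p lam jk.1 jk.2) := by
  apply le_antisymm <;> rw [Ideal.span_le]
  · intro f hf
    obtain ⟨j, k, rfl⟩ := exists_minor_eq_of_mem_minorSet hn hf
    exact Ideal.subset_span ⟨(j, k), rfl⟩
  · rintro _ ⟨⟨j, k⟩, rfl⟩
    change minor p lam j k ∈ Ideal.span (minorSet n p lam)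
    obtain rfl | hne := eq_or_ne j k
    · simp [minor]
    wlog hjk : j ≠ 1 ∧ (k = 1 ∨ j < k) generalizing j k
    · rw [show minor p lam j k = -minor p lam k j from (neg_sub _ _).symm]
      exact neg_mem (this k j hne.symm (by grind))
    exact Ideal.subset_span (minor_mem_minorSet hn p lam hjk.1 hjk.2)

end Minors

section Spanning

variable {n : ℕ} [NeZero n]

theorem adjoin_insert_poleVar :
    Algebra.adjoin ℂ (insert (X (Sum.inr ())) (Set.range poleVar) : Set (UVPoly n)) = ⊤ := by
  have hrange : Set.range poleVar = Set.range fun i : Fin n => (X (Sum.inl i) : UVPoly n) :=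
    (Equiv.swap (0 : Fin n) 1).surjective.range_comp fun i => (X (Sum.inl i) : UVPoly n)
  rw [hrange, ← adjoin_range_X, Sum.range_eq, Set.range_unique (f := _ ∘ Sum.inr), Set.insert_eq,
    Set.union_comm]
  rfl

theorem poleVar_mul_poleVar_one {A : Type*} [CommRing A] [Algebra ℂ A] {p : Fin n → ℕ}
    {lam : Fin n → ℂ} {f : UVPoly n →ₐ[ℂ] A} (hf : ∀ j k, f (minor p lam j k) = 0) {j : Fin n}
    (hj : j ≠ 1) :
    f (poleVar j) * f (poleVar 1) = f (X (Sum.inr ())) ^ (p 1 + p j) +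
      pole lam j • f (X (Sum.inr ())) ^ p 1 * f (poleVar j) := by
  have h := hf j 1
  rw [minor, topRow, topRow, bottomRow, bottomRow, if_pos rfl, if_pos rfl, if_neg hj, if_neg hj,
    C_mul'] at h
  simp only [map_sub, map_mul, map_add, map_pow, map_smul] at h
  rw [← sub_eq_zero, ← h, Algebra.smul_def, Algebra.smul_def]
  ring

theorem poleVar_mul_poleVar {A : Type*} [CommRing A] [Algebra ℂ A] {p : Fin n → ℕ}
    {lam : Fin n → ℂ} {f : UVPoly n →ₐ[ℂ] A} (hf : ∀ j k, f (minor p lam j k) = 0) {j k : Fin n}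
    (hj : j ≠ 1) (hk : k ≠ 1) (hjk : pole lam j ≠ pole lam k) :
    f (poleVar j) * f (poleVar k) = (pole lam k - pole lam j)⁻¹ •
      (f (X (Sum.inr ())) ^ p j * f (poleVar k) - f (X (Sum.inr ())) ^ p k * f (poleVar j)) := by
  have h := hf j k
  rw [minor, topRow, topRow, bottomRow, bottomRow, if_neg hj, if_neg hj, if_neg hk, if_neg hk,
    C_mul', C_mul'] at h
  simp only [map_sub, map_mul, map_add, map_pow, map_smul] at h
  rw [eq_inv_smul_iff₀ (sub_ne_zero.2 hjk.symm), ← sub_eq_zero, ← h]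
  simp only [Algebra.smul_def, map_sub]
  ring

theorem span_normalForm_poleVar_eq_top {A : Type*} [CommRing A] [Algebra ℂ A] {p : Fin n → ℕ}
    {lam : Fin n → ℂ} (hpole : Set.InjOn (pole lam) {1}ᶜ) {f : UVPoly n →ₐ[ℂ] A}
    (hf : ∀ j k, f (minor p lam j k) = 0) (hsurj : Function.Surjective f) :
    Submodule.span ℂ (Set.range (normalForm (f (X (Sum.inr ()))) fun j => f (poleVar j))) = ⊤ := by
  refine span_normalForm_eq_top ?_ fun j k hjk => ?_
  · rw [← Function.comp_def f poleVar, Set.range_comp, ← Set.image_insert_eq, ← AlgHom.map_adjoin,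
      adjoin_insert_poleVar, Algebra.map_top, AlgHom.range_eq_top]
    exact hsurj
  by_cases hk : k = 1
  · refine ⟨.X ^ (p 1 + p j), pole lam j • .X ^ p 1, 0, ?_⟩
    simp only [hk, poleVar_mul_poleVar_one hf (hk ▸ hjk), map_pow, map_smul, Polynomial.aeval_X,
      map_zero, zero_mul, add_zero]
  by_cases hj : j = 1
  · refine ⟨.X ^ (p 1 + p k), 0, pole lam k • .X ^ p 1, ?_⟩
    simp only [hj, mul_comm (f (poleVar 1)), poleVar_mul_poleVar_one hf hk, map_pow, map_smul,
      Polynomial.aeval_X, map_zero, zero_mul, add_zero]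
  · refine ⟨0, -(pole lam k - pole lam j)⁻¹ • .X ^ p k, (pole lam k - pole lam j)⁻¹ • .X ^ p j, ?_⟩
    rw [poleVar_mul_poleVar hf hj hk (mt (hpole hj hk) hjk)]
    simp only [map_pow, map_smul, Polynomial.aeval_X, map_zero, smul_sub, neg_smul, map_neg,
      neg_mul, smul_mul_assoc]
    ring

end Spanning

section Independence

variable {n : ℕ} [NeZero n] {p : Fin n → ℕ} {lam : Fin n → ℂ}

theorem veroneseMap_minor (hn : 2 ≤ n) (p : Fin n → ℕ) (lam : Fin n → ℂ) (j k : Fin n) :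
    veroneseMap n p lam (minor p lam j k) = 0 := by
  obtain ⟨a, hja, hja'⟩ := exists_veroneseMap_rows_eq hn p lam j
  obtain ⟨b, hkb, hkb'⟩ := exists_veroneseMap_rows_eq hn p lam k
  rw [minor, map_sub, map_mul, map_mul, hja, hja', hkb, hkb']
  ring

theorem exists_algHom_of_transcendental {L : Type*} [Field L] [IsAlgClosed L] [Algebra ℂ L]
    (hn : 2 ≤ n) (hp : ∀ i, 0 < p i) (lam : Fin n → ℂ) {t : L} (ht : Transcendental ℂ t) (z : L) :
    ∃ ψ : BAlg n p lam →ₐ[ℂ] L, ψ (vElem n p lam) = z ∧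
      ψ (Ideal.Quotient.mk _ (X 0 ^ p 0)) = t * ψ (Ideal.Quotient.mk _ (X 1 ^ p 1)) := by
  have ht_ne (c : ℂ) : t ≠ algebraMap ℂ L c := fun h => ht (h ▸ isAlgebraic_algebraMap c)
  let q (i : Fin n) : L :=
    if i = 0 then t else if i = 1 then 1 else algebraMap ℂ L (lam i) - t
  have hq (i : Fin n) : q i ≠ 0 := by
    simp only [q]
    split_ifs
    · simpa using ht_ne 0
    · exact one_ne_zero
    · exact sub_ne_zero.2 (ht_ne _).symm
  obtain ⟨x, y, hxy, hxz⟩ := exists_pow_eq_mul_and_prod_eq hp hq z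
  have hx0 : x 0 ^ p 0 = t * y := by rw [hxy, show q 0 = t from if_pos rfl]
  have hx1 : x 1 ^ p 1 = y := by
    rw [hxy, show q 1 = 1 from (if_neg (zero_ne_fin_one hn).symm).trans (if_pos rfl), one_mul]
  have hxi (i : Fin n) (hi : 2 ≤ (i : ℕ)) : x i ^ p i = (algebraMap ℂ L (lam i) - t) * y := by
    obtain ⟨h0, h1⟩ := (two_le_val_iff hn).1 hi
    rw [hxy, show q i = _ from (if_neg h0).trans (if_neg h1)]
  have hker : ∀ f ∈ BIdl n p lam, aeval x f = 0 := by
    suffices BIdl n p lam ≤ RingHom.ker (aeval x) from fun f hf => this hf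
    rw [BIdl, Ideal.span_le]
    rintro _ ⟨i, hi, rfl⟩
    rw [SetLike.mem_coe, RingHom.mem_ker]
    simp only [map_sub, map_add, map_mul, map_pow, aeval_X, algHom_C, hx0, hx1, hxi i hi]
    ring
  refine ⟨Ideal.Quotient.liftₐ _ (aeval x) hker, ?_, ?_⟩
  · exact (map_prod (aeval x : BPoly n →ₐ[ℂ] L) _ _).trans
      (hxz ▸ Finset.prod_congr rfl fun i _ => aeval_X x i)
  · change aeval x (X 0 ^ p 0) = t * aeval x (X 1 ^ p 1)
    simp only [map_pow, aeval_X, hx0, hx1]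

theorem apply_bottomRow_eq_mul {L : Type*} [CommRing L] [Algebra ℂ L] (hn : 2 ≤ n) {t : L}
    {ψ : BAlg n p lam →ₐ[ℂ] L}
    (hψ : ψ (Ideal.Quotient.mk _ (X 0 ^ p 0)) = t * ψ (Ideal.Quotient.mk _ (X 1 ^ p 1)))
    (j : Fin n) :
    ψ (veroneseMap n p lam (bottomRow p lam j)) = t * ψ (veroneseMap n p lam (topRow p j)) := by
  obtain ⟨w, htop, hbot⟩ := exists_veroneseMap_rows_eq hn p lam j
  rw [htop, hbot, map_mul, map_mul, hψ]
  ring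

theorem exists_algHom_poleVar_eq {K L : Type*} [Field K] [Field L] [IsAlgClosed L] [Algebra ℂ K]
    [Algebra K L] [Algebra ℂ L] [IsScalarTower ℂ K L] (hn : 2 ≤ n) (hp : ∀ i, 0 < p i)
    (lam : Fin n → ℂ) {t : K} (ht : Transcendental ℂ t) (z : L) :
    ∃ (ψ : BAlg n p lam →ₐ[ℂ] L) (r : Fin n → K),
      r 1 = t ∧ (∀ j ≠ 1, r j = (t - algebraMap ℂ K (pole lam j))⁻¹) ∧
      ψ (veroneseMap n p lam (X (Sum.inr ()))) = z ∧
      ∀ j, ψ (veroneseMap n p lam (poleVar j)) = z ^ p j * algebraMap K L (r j) := by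
  have ht' : Transcendental ℂ (algebraMap K L t) :=
    (transcendental_algebraMap_iff (algebraMap K L).injective).2 ht
  obtain ⟨ψ, hψv, hψ⟩ := exists_algHom_of_transcendental hn hp lam ht' z
  have hv : ψ (veroneseMap n p lam (X (Sum.inr ()))) = z := by
    rw [aeval_X, Sum.elim_inr, hψv]
  refine ⟨ψ, fun j => if j = 1 then t else (t - algebraMap ℂ K (pole lam j))⁻¹, if_pos rfl,
    fun j hj => if_neg hj, hv, fun j => ?_⟩
  beta_reduce
  have hrow := apply_bottomRow_eq_mul hn hψ j
  obtain rfl | hj := eq_or_ne j 1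
  · rw [bottomRow, if_pos rfl, topRow, if_pos rfl, map_pow, map_pow, hv] at hrow
    rw [hrow, mul_comm, if_pos rfl]
  · have hne : t - algebraMap ℂ K (pole lam j) ≠ 0 :=
      sub_ne_zero.2 fun h => ht (h ▸ isAlgebraic_algebraMap _)
    rw [bottomRow, if_neg hj, topRow, if_neg hj, C_mul'] at hrow
    simp only [map_add, map_smul, map_pow, hv] at hrow
    rw [if_neg hj, map_inv₀, ← div_eq_mul_inv, eq_div_iff ((map_ne_zero _).2 hne), map_sub,
      ← IsScalarTower.algebraMap_apply, mul_sub, mul_comm _ (algebraMap K L t), ← hrow,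
      Algebra.smul_def]
    ring

theorem exists_transcendental_algebraicClosure (K : Type*) [Field K] :
    ∃ z : AlgebraicClosure (RatFunc K), Transcendental K z :=
  ⟨algebraMap _ _ RatFunc.X,
    (transcendental_algebraMap_iff (RingHom.injective _)).2 RatFunc.transcendental_X⟩

theorem linearIndependent_normalForm_veroneseMap (hn : 2 ≤ n) (hp : ∀ i, 0 < p i)
    (hpole : Set.InjOn (pole lam) {1}ᶜ) :
    LinearIndependent ℂ (normalForm (veroneseMap n p lam (X (Sum.inr ())))
      fun j => veroneseMap n p lam (poleVar j)) := by
  have ht : Transcendental ℂ (RatFunc.X : RatFunc ℂ) := RatFunc.transcendental_X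
  obtain ⟨z, hz⟩ := exists_transcendental_algebraicClosure (RatFunc ℂ)
  obtain ⟨ψ, r, hr₀, hr, hv, hU⟩ := exists_algHom_poleVar_eq hn hp lam ht z
  refine LinearIndependent.of_comp ψ.toLinearMap ?_
  have hcomp : ψ.toLinearMap ∘ normalForm (veroneseMap n p lam (X (Sum.inr ())))
      (fun j => veroneseMap n p lam (poleVar j)) = _ := funext fun k => map_normalForm ψ _ _ k
  rw [hcomp, hv, Function.comp_def, funext hU]
  exact linearIndependent_normalForm ht hz hpole hr₀ hr p

theorem ker_veroneseMap (hn : 2 ≤ n) (hp : ∀ i, 0 < p i) (hpole : Set.InjOn (pole lam) {1}ᶜ) :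
    RingHom.ker (veroneseMap n p lam) = Ideal.span (minorSet n p lam) := by
  set I := Ideal.span (minorSet n p lam)
  have hI : I = _ := span_minorSet hn p lam
  have hminor (j k : Fin n) : Ideal.Quotient.mkₐ ℂ I (minor p lam j k) = 0 :=
    Ideal.Quotient.eq_zero_iff_mem.2 (hI ▸ Ideal.subset_span ⟨(j, k), rfl⟩)
  have hle : I ≤ RingHom.ker (veroneseMap n p lam) := by
    rw [hI, Ideal.span_le]
    rintro _ ⟨⟨j, k⟩, rfl⟩
    exact veroneseMap_minor hn p lam j k
  have hspan := span_normalForm_poleVar_eq_top hpole hminor (Ideal.Quotient.mkₐ_surjective ℂ I)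
  let φ : UVPoly n ⧸ I →ₐ[ℂ] BAlg n p lam := Ideal.Quotient.liftₐ I (veroneseMap n p lam) hle
  have hli : LinearIndependent ℂ (φ.toLinearMap ∘
      normalForm (Ideal.Quotient.mkₐ ℂ I (X (Sum.inr ())))
        fun j => Ideal.Quotient.mkₐ ℂ I (poleVar j)) := by
    convert linearIndependent_normalForm_veroneseMap hn hp hpole using 1
    funext k
    exact map_normalForm φ _ _ k
  have hdisj := Submodule.range_ker_disjoint hli
  rw [hspan, top_disjoint] at hdisj
  refine le_antisymm (fun f hf => ?_) hle
  exact Ideal.Quotient.eq_zero_iff_mem.1 ((Submodule.eq_bot_iff _).1 hdisj _ hf)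

end Independence

section Weights

theorem isWeightedHomogeneous_aeval {R σ τ M N : Type*} [CommSemiring R] [AddCommMonoid M]
    [AddCommMonoid N] {w : σ → M} {w' : τ → N} (g : M →+ N) {F : σ → MvPolynomial τ R}
    (hF : ∀ i, IsWeightedHomogeneous w' (F i) (g (w i))) {f : MvPolynomial σ R} {d : M}
    (hf : IsWeightedHomogeneous w f d) : IsWeightedHomogeneous w' (aeval F f) (g d) := by
  rw [aeval_def, eval₂_eq]
  refine IsWeightedHomogeneous.sum _ _ _ fun m hm => ?_
  rw [algebraMap_eq, ← hf (mem_support_iff.1 hm), Finsupp.weight_apply, Finsupp.sum, map_sum]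
  refine IsWeightedHomogeneous.C_mul (.prod _ _ _ fun i _ => ?_) _
  rw [map_nsmul]
  exact (hF i).pow _

section LGroup

variable {ι : Type} [DecidableEq ι] {p : ι → ℕ}

theorem nsmul_egen (p : ι → ℕ) (i : ι) : p i • egen p i = cgen p := by
  rw [egen, cgen, ← QuotientAddGroup.mk_nsmul, ← natCast_zsmul, ← sub_eq_zero,
    ← QuotientAddGroup.mk_sub, QuotientAddGroup.eq_zero_iff]
  exact AddSubgroup.subset_closure ⟨i, rfl⟩

variable [Fintype ι]

theorem exists_eq_mul_of_mem_LRel {v : Option ι → ℤ} (hv : v ∈ LRel ι p) :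
    ∃ a : ι → ℤ, (∀ i, v (some i) = a i * p i) ∧ v none = -∑ i, a i := by
  induction hv using AddSubgroup.closure_induction with
  | mem v hv =>
    obtain ⟨i, rfl⟩ := hv
    refine ⟨Pi.single i 1, fun j => ?_, by simp⟩
    obtain rfl | h := eq_or_ne j i
    · simp
    · simp [h]
  | zero => exact ⟨0, by simp, by simp⟩
  | add v w _ _ hv hw =>
    obtain ⟨a, ha, ha'⟩ := hv
    obtain ⟨b, hb, hb'⟩ := hw
    refine ⟨a + b, fun i => by simp [ha, hb, add_mul], ?_⟩
    simp only [Pi.add_apply, ha', hb', Finset.sum_add_distrib, neg_add]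
  | neg v _ hv =>
    obtain ⟨a, ha, ha'⟩ := hv
    exact ⟨-a, fun i => by simp [ha], by simp [ha']⟩

theorem exists_eq_mul_of_sum_zsmul_egen_eq_zero {c : ι → ℤ} (h : ∑ i, c i • egen p i = 0) :
    ∃ a : ι → ℤ, (∀ i, c i = a i * p i) ∧ ∑ i, a i = 0 := by
  have hmk : ∑ i, c i • egen p i =
      QuotientAddGroup.mk' (LRel ι p) (∑ i, c i • Pi.single (some i) 1) := by
    simp only [map_sum, map_zsmul]
    rfl
  rw [hmk, QuotientAddGroup.mk'_apply, QuotientAddGroup.eq_zero_iff] at h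
  obtain ⟨a, ha, ha'⟩ := exists_eq_mul_of_mem_LRel h
  refine ⟨a, fun i => ?_, neg_eq_zero.1 (ha'.symm.trans (by simp [Finset.sum_apply]))⟩
  rw [← ha i]
  simp [Finset.sum_apply, Pi.single_apply]

end LGroup

variable {n : ℕ} {p : Fin n → ℕ}

theorem exists_eq_add_mul_of_wtB_eq {m : Fin n →₀ ℕ} {k : ℤ} (h : wtB p m = k • ∑ i, egen p i) :
    ∃ a : Fin n → ℤ, (∀ i, (m i : ℤ) = k + a i * p i) ∧ ∑ i, a i = 0 := by
  have h0 : ∑ i, ((m i : ℤ) - k) • egen p i = 0 := by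
    simp only [sub_smul, natCast_zsmul, Finset.sum_sub_distrib, ← Finset.smul_sum]
    exact sub_eq_zero.2 h
  obtain ⟨a, ha, ha_sum⟩ := exists_eq_mul_of_sum_zsmul_egen_eq_zero h0
  exact ⟨a, fun i => by rw [← ha]; ring, ha_sum⟩

theorem polyCompB_eq (p : Fin n → ℕ) (y : LGroup (Fin n) p) :
    polyCompB p y = weightedHomogeneousSubmodule ℂ (egen p) y := by
  have hwt (m : Fin n →₀ ℕ) : wtB p m = Finsupp.weight (egen p) m := by
    rw [Finsupp.weight_apply, Finsupp.sum_fintype _ _ (by simp)]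
    rfl
  ext f
  exact forall_congr' fun m => by rw [hwt]

theorem isWeightedHomogeneous_cofactor (p : Fin n → ℕ) (j : Fin n) :
    IsWeightedHomogeneous (egen p) (cofactor p j)
      (∑ l ∈ Finset.univ.erase j, p j • egen p l) :=
  .prod _ _ _ fun l _ => (isWeightedHomogeneous_X ℂ _ l).pow _

variable [NeZero n]

/-- The degrees `deg uᵢ` and `deg v`, as a weight function on the variables. -/
def uvWeight (p : Fin n → ℕ) : Fin n ⊕ Unit → ℕ :=
  Sum.elim (fun i => p (Equiv.swap 0 1 i)) 1

theorem UVComp_eq (hn : 2 ≤ n) (p : Fin n → ℕ) (d : ℕ) :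
    UVComp p d = weightedHomogeneousSubmodule ℂ (uvWeight p) d := by
  have hp (i : Fin n) : (if (i : ℕ) = 0 then p 1 else if (i : ℕ) = 1 then p 0 else p i) =
      p (Equiv.swap 0 1 i) := by
    simp only [Equiv.swap_apply_def, Fin.ext_iff, Fin.val_zero, val_fin_one hn]
    split_ifs <;> rfl
  have hwt (m : Fin n ⊕ Unit →₀ ℕ) : wtUV p m = Finsupp.weight (uvWeight p) m := by
    rw [Finsupp.weight_apply, Finsupp.sum_fintype _ _ (by simp), Fintype.sum_sum_type]
    simp only [wtUV, hp]
    simp [uvWeight, add_comm]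
  ext f
  exact forall_congr' fun m => by rw [hwt]

theorem isWeightedHomogeneous_uPoly_swap (hn : 2 ≤ n) (p : Fin n → ℕ) (j : Fin n) :
    IsWeightedHomogeneous (egen p) (uPoly n p (Equiv.swap 0 1 j)) (p j • ∑ i, egen p i) := by
  have hX (i : Fin n) : IsWeightedHomogeneous (egen p) (X i ^ p i : BPoly n) (cgen p) :=
    nsmul_egen p i ▸ (isWeightedHomogeneous_X ℂ _ i).pow (p i)
  rw [uPoly_swap hn, ← Finset.sum_nsmul, ← Finset.add_sum_erase _ _ (Finset.mem_univ j), nsmul_egen]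
  refine .mul ?_ (isWeightedHomogeneous_cofactor p j)
  split_ifs
  exacts [hX 1, hX 0, (hX 1).neg]

theorem map_UVComp_le (hn : 2 ≤ n) (p : Fin n → ℕ) (lam : Fin n → ℂ) (d : ℕ) :
    (UVComp p d).map (veroneseMap n p lam).toLinearMap ≤
      SCompB n p lam (d • ∑ i, egen p i) := by
  have hF : ∀ i, IsWeightedHomogeneous (egen p) (Sum.elim (uPoly n p) (fun _ => ∏ i, X i) i)
      (multiplesHom _ (∑ i, egen p i) (uvWeight p i)) := by
    rintro (i | _)
    · simpa [uvWeight] using isWeightedHomogeneous_uPoly_swap hn p (Equiv.swap 0 1 i)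
    · simpa [uvWeight] using IsWeightedHomogeneous.prod Finset.univ _ _
        fun i _ => isWeightedHomogeneous_X ℂ (egen p) i
  have hlift (f : UVPoly n) : veroneseMap n p lam f = Ideal.Quotient.mkₐ ℂ (BIdl n p lam)
      (aeval (Sum.elim (uPoly n p) fun _ => ∏ i, X i) f) := by
    refine DFunLike.congr_fun (f := veroneseMap n p lam)
      (g := (Ideal.Quotient.mkₐ ℂ _).comp (aeval _)) (algHom_ext fun i => ?_) f
    rw [AlgHom.comp_apply, aeval_X, aeval_X]
    cases i <;> rfl
  rintro _ ⟨f, hf, rfl⟩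
  rw [UVComp_eq hn] at hf
  refine ⟨_, ?_, (hlift f).symm⟩
  rw [polyCompB_eq]
  exact isWeightedHomogeneous_aeval _ hF hf

end Weights

section Components

variable {n : ℕ} {p : Fin n → ℕ}

theorem mod_eq_and_sum_div_eq_of_wtB_eq (hp : ∀ i, 0 < p i) {m : Fin n →₀ ℕ} {d : ℕ}
    (h : wtB p m = d • ∑ i, egen p i) :
    (∀ i, m i % p i = d % p i) ∧ ∑ i, m i / p i = ∑ i, d / p i := by
  rw [← natCast_zsmul] at h
  obtain ⟨a, ha, ha_sum⟩ := exists_eq_add_mul_of_wtB_eq h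
  refine ⟨fun i => ?_, ?_⟩ <;> zify
  · rw [ha, Int.add_mul_emod_self_right]
  · have hdiv (i : Fin n) : (m i : ℤ) / p i = d / p i + a i := by
      rw [ha, Int.add_mul_ediv_right _ _ (Int.natCast_ne_zero.2 (hp i).ne')]
    simp only [hdiv, Finset.sum_add_distrib, ha_sum, add_zero]

variable [NeZero n]

/-- The space of linear forms in `x₁^{p₁}` and `x₂^{p₂}`, which contains every `xᵢ^{pᵢ}`. -/
def pencil (n : ℕ) [NeZero n] (p : Fin n → ℕ) (lam : Fin n → ℂ) : Submodule ℂ (BAlg n p lam) :=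
  Submodule.span ℂ {Ideal.Quotient.mk _ (X 0 ^ p 0), Ideal.Quotient.mk _ (X 1 ^ p 1)}

theorem mk_X_pow_mem_pencil (hn : 2 ≤ n) (p : Fin n → ℕ) (lam : Fin n → ℂ) (i : Fin n) :
    Ideal.Quotient.mk _ (X i ^ p i) ∈ pencil n p lam := by
  have h0 : Ideal.Quotient.mk _ (X 0 ^ p 0) ∈ pencil n p lam :=
    Submodule.subset_span (Set.mem_insert _ _)
  have h1 : Ideal.Quotient.mk _ (X 1 ^ p 1) ∈ pencil n p lam :=
    Submodule.subset_span (Set.mem_insert_of_mem _ rfl)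
  by_cases hi : 2 ≤ (i : ℕ)
  · rw [mk_X_pow_eq p lam hi, C_mul', map_sub]
    exact sub_mem (Submodule.smul_mem _ (lam i) h1) h0
  · obtain rfl | rfl : i = 0 ∨ i = 1 := by rw [two_le_val_iff hn] at hi; tauto
    exacts [h0, h1]

theorem SCompB_nsmul_le (hn : 2 ≤ n) (hp : ∀ i, 0 < p i) (lam : Fin n → ℂ) (d : ℕ) :
    SCompB n p lam (d • ∑ i, egen p i) ≤ (pencil n p lam ^ ∑ i, d / p i).map
      (LinearMap.mulLeft ℂ (Ideal.Quotient.mk _ (∏ i, X i ^ (d % p i)))) := by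
  rintro _ ⟨f, hf, rfl⟩
  rw [f.as_sum, map_sum]
  refine Submodule.sum_mem _ fun m hm => ?_
  obtain ⟨hmod, hdiv⟩ := mod_eq_and_sum_div_eq_of_wtB_eq hp (hf m (mem_support_iff.1 hm))
  have hmonomial : (monomial m (coeff m f) : BPoly n) =
      coeff m f • ((∏ i, X i ^ (d % p i)) * ∏ i, (X i ^ p i) ^ (m i / p i)) := by
    rw [monomial_eq, Finsupp.prod_fintype _ _ fun i => pow_zero _, ← Finset.prod_mul_distrib,
      smul_eq_C_mul]
    simp only [← hmod, ← pow_mul, ← pow_add, Nat.mod_add_div]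
  rw [hmonomial, map_smul, ← hdiv]
  refine Submodule.smul_mem _ _ ⟨∏ i, Ideal.Quotient.mk _ (X i ^ p i) ^ (m i / p i), ?_, ?_⟩
  · exact SetLike.prod_mem_graded (fun k => pencil n p lam ^ k) _ _ fun i _ =>
      Submodule.pow_mem_pow _ (mk_X_pow_mem_pencil hn p lam i) _
  · simp only [LinearMap.mulLeft_apply, AlgHom.toLinearMap_apply, Ideal.Quotient.mkₐ_eq_mk,
      map_mul, map_prod, map_pow]

theorem finiteDimensional_pencil_pow (p : Fin n → ℕ) (lam : Fin n → ℂ) (m : ℕ) :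
    FiniteDimensional ℂ ↥(pencil n p lam ^ m) :=
  Module.Finite.iff_fg.2 ((Submodule.fg_span (Set.toFinite _)).pow m)

theorem finiteDimensional_SCompB_nsmul (hn : 2 ≤ n) (hp : ∀ i, 0 < p i) (lam : Fin n → ℂ)
    (d : ℕ) : FiniteDimensional ℂ (SCompB n p lam (d • ∑ i, egen p i)) :=
  have := finiteDimensional_pencil_pow p lam (∑ i, d / p i)
  Submodule.finiteDimensional_of_le (SCompB_nsmul_le hn hp lam d)

theorem finrank_SCompB_nsmul_le (hn : 2 ≤ n) (hp : ∀ i, 0 < p i) (lam : Fin n → ℂ) (d : ℕ) :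
    Module.finrank ℂ (SCompB n p lam (d • ∑ i, egen p i)) ≤ ∑ i, d / p i + 1 :=
  have := finiteDimensional_pencil_pow p lam (∑ i, d / p i)
  (Submodule.finrank_mono (SCompB_nsmul_le hn hp lam d)).trans
    ((Submodule.finrank_map_le _ _).trans (finrank_span_pair_pow_le _ _ _))

theorem SCompB_zsmul_eq_bot (p : Fin n → ℕ) (lam : Fin n → ℂ) {k : ℤ} (hk : k < 0) :
    SCompB n p lam (k • ∑ i, egen p i) = ⊥ := by
  suffices polyCompB p (k • ∑ i, egen p i) = ⊥ by rw [SCompB, this, Submodule.map_bot]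
  refine (Submodule.eq_bot_iff _).2 fun f hf => ?_
  ext m
  by_contra hm
  obtain ⟨a, ha, ha_sum⟩ := exists_eq_add_mul_of_wtB_eq (hf m hm)
  have ha_pos (i : Fin n) : 0 < a i :=
    pos_of_mul_pos_left (by linarith [ha i, (m i).cast_nonneg (α := ℤ)]) (p i).cast_nonneg
  exact (Finset.sum_pos (fun i _ => ha_pos i) Finset.univ_nonempty).ne' ha_sum

/-- The degree `d` members of `normalForm v U` when `v` has degree `1` and `U i` has degree
`w i`: the index `none` stands for `v ^ d`, and `⟨i, b⟩` for `v ^ a * U i ^ (b + 1)` with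
`a = d - w i * (b + 1)`. -/
def normalFormOfDegree {ι : Type*} (w : ι → ℕ) (d : ℕ) (q : Option (Σ i, Fin (d / w i))) :
    ℕ × Option (ι × ℕ) :=
  q.elim (d, none) fun b => (d - w b.1 * (b.2 + 1), some (b.1, b.2))

theorem injective_normalFormOfDegree {ι : Type*} (w : ι → ℕ) (d : ℕ) :
    Function.Injective (normalFormOfDegree w d) := by
  rintro (_ | ⟨i, b⟩) (_ | ⟨j, c⟩) h <;>
    simp only [normalFormOfDegree, Option.elim_none, Option.elim_some, Prod.mk.injEq,
      Option.some.injEq, reduceCtorEq, and_false] at h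
  · rfl
  · obtain ⟨_, rfl, hbc⟩ := h
    rw [Fin.ext hbc]

theorem normalForm_mem_UVComp (hn : 2 ≤ n) (p : Fin n → ℕ) (d : ℕ)
    (q : Option (Σ i, Fin (d / p i))) :
    normalForm (X (Sum.inr ())) poleVar (normalFormOfDegree p d q) ∈ UVComp p d := by
  rw [UVComp_eq hn, mem_weightedHomogeneousSubmodule]
  have hv (a : ℕ) : IsWeightedHomogeneous (uvWeight p) (X (Sum.inr ()) ^ a : UVPoly n) a := by
    simpa [uvWeight] using (isWeightedHomogeneous_X ℂ (uvWeight p) (Sum.inr ())).pow a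
  obtain _ | ⟨i, b⟩ := q
  · simpa [normalForm, normalFormOfDegree, purePower] using hv d
  have hU : IsWeightedHomogeneous (uvWeight p) (poleVar i ^ ((b : ℕ) + 1)) (p i * (b + 1)) := by
    have := (isWeightedHomogeneous_X ℂ (uvWeight p) (Sum.inl (Equiv.swap 0 1 i))).pow (b + 1)
    simpa [uvWeight, poleVar, mul_comm] using this
  have hle : p i * (b + 1) ≤ d := (Nat.mul_le_mul_left _ b.2).trans (Nat.mul_div_le d _)
  have := (hv (d - p i * (b + 1))).mul hU
  rwa [Nat.sub_add_cancel hle] at this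

theorem map_UVComp_eq {lam : Fin n → ℂ} (hn : 2 ≤ n) (hp : ∀ i, 0 < p i)
    (hpole : Set.InjOn (pole lam) {1}ᶜ) (d : ℕ) :
    (UVComp p d).map (veroneseMap n p lam).toLinearMap =
      SCompB n p lam (d • ∑ i, egen p i) := by
  have := finiteDimensional_SCompB_nsmul hn hp lam d
  refine Submodule.eq_of_le_of_finrank_le (map_UVComp_le hn p lam d) ?_
  have hli := (linearIndependent_normalForm_veroneseMap hn hp hpole).comp _
    (injective_normalFormOfDegree p d)
  have hcard : Fintype.card (Option (Σ i, Fin (d / p i))) = ∑ i, d / p i + 1 := by simp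
  calc Module.finrank ℂ (SCompB n p lam (d • ∑ i, egen p i))
      ≤ ∑ i, d / p i + 1 := finrank_SCompB_nsmul_le hn hp lam d
    _ = Module.finrank ℂ (Submodule.span ℂ (Set.range _)) := by
        rw [← hcard, finrank_span_eq_card hli]
    _ ≤ Module.finrank ℂ ((UVComp p d).map (veroneseMap n p lam).toLinearMap) := by
        have := Submodule.finiteDimensional_of_le (map_UVComp_le hn p lam d)
        refine Submodule.finrank_mono (Submodule.span_le.2 ?_)
        rintro _ ⟨q, rfl⟩
        exact ⟨_, normalForm_mem_UVComp hn p d q, map_normalForm (veroneseMap n p lam) _ _ _⟩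

theorem range_veroneseMap {lam : Fin n → ℂ} (hn : 2 ≤ n) (hp : ∀ i, 0 < p i)
    (hpole : Set.InjOn (pole lam) {1}ᶜ) :
    Subalgebra.toSubmodule (veroneseMap n p lam).range = SVerB n p lam (∑ i, egen p i) := by
  have htop : ⨆ d, UVComp (n := n) p d = ⊤ := by
    simp only [UVComp_eq hn]
    exact (weightedDecomposition ℂ (uvWeight p)).isInternal.submodule_iSup_eq_top
  calc Subalgebra.toSubmodule (veroneseMap n p lam).range
      = (⨆ d, UVComp p d).map (veroneseMap n p lam).toLinearMap := by
        rw [htop, Submodule.map_top]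
        rfl
    _ = ⨆ d : ℕ, SCompB n p lam (d • ∑ i, egen p i) := by
        simp only [Submodule.map_iSup, map_UVComp_eq hn hp hpole]
    _ = ⨆ k : ℤ, SCompB n p lam (k • ∑ i, egen p i) := by
        refine le_antisymm (iSup_le fun d => ?_) (iSup_le fun k => ?_)
        · exact natCast_zsmul (∑ i, egen p i) d ▸ le_iSup_of_le (d : ℤ) le_rfl
        · obtain hk | hk := lt_or_ge k 0
          · exact (SCompB_zsmul_eq_bot p lam hk).trans_le bot_le
          · lift k to ℕ using hk
            exact natCast_zsmul (∑ i, egen p i) k ▸ le_iSup_of_le k le_rfl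

end Components

theorem veronese_presentation_general (n : ℕ) (hn : 2 ≤ n) [NeZero n] (p : Fin n → ℕ)
    (hp : ∀ i, 0 < p i) (lam : Fin n → ℂ)
    (hlam0 : ∀ i : Fin n, 2 ≤ (i : ℕ) → lam i ≠ 0)
    (hlamd : ∀ i j : Fin n, 2 ≤ (i : ℕ) → 2 ≤ (j : ℕ) → i ≠ j → lam i ≠ lam j) :
    Subalgebra.toSubmodule
        (MvPolynomial.aeval (Sum.elim (uElem n p lam) (fun _ => vElem n p lam)) :
          UVPoly n →ₐ[ℂ] BAlg n p lam).range =
      SVerB n p lam (∑ i, egen p i) ∧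
    RingHom.ker
        (MvPolynomial.aeval (Sum.elim (uElem n p lam) (fun _ => vElem n p lam)) :
          UVPoly n →ₐ[ℂ] BAlg n p lam) =
      Ideal.span (minorSet n p lam) ∧
    ∀ d : ℕ,
      (MvPolynomial.aeval (Sum.elim (uElem n p lam) (fun _ => vElem n p lam)) :
          UVPoly n →ₐ[ℂ] BAlg n p lam) '' ↑(UVComp p d) =
        ↑(SCompB n p lam (d • ∑ i, egen p i)) :=
  have hpole := injOn_pole hn hlam0 hlamd
  ⟨range_veroneseMap hn hp hpole, ker_veroneseMap hn hp hpole, fun d =>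
    congrArg SetLike.coe (map_UVComp_eq hn hp hpole d)⟩

/-- The `ℂ`-algebra map `φ : ℂ[u₁,…,uₙ,v] → S`, `uᵢ ↦ 𝗎ᵢ`, `v ↦ 𝗏`,
has image the Veronese subring `S^s`, kernel the ideal of `2×2` minors, and maps the
weighted-homogeneous component of degree `d` onto `S_{d·s}`. -/
theorem veronese_presentation (n : ℕ) (hn : 3 ≤ n) [NeZero n] (p : Fin n → ℕ)
    (hp : ∀ i, 2 ≤ p i) (lam : Fin n → ℂ)
    (hlam0 : ∀ i : Fin n, 2 ≤ (i : ℕ) → lam i ≠ 0)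
    (hlamd : ∀ i j : Fin n, 2 ≤ (i : ℕ) → 2 ≤ (j : ℕ) → i ≠ j → lam i ≠ lam j) :
    Subalgebra.toSubmodule
        (MvPolynomial.aeval (Sum.elim (uElem n p lam) (fun _ => vElem n p lam)) :
          UVPoly n →ₐ[ℂ] BAlg n p lam).range =
      SVerB n p lam (∑ i, egen p i) ∧
    RingHom.ker
        (MvPolynomial.aeval (Sum.elim (uElem n p lam) (fun _ => vElem n p lam)) :
          UVPoly n →ₐ[ℂ] BAlg n p lam) =
      Ideal.span (minorSet n p lam) ∧
    ∀ d : ℕ,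
      (MvPolynomial.aeval (Sum.elim (uElem n p lam) (fun _ => vElem n p lam)) :
          UVPoly n →ₐ[ℂ] BAlg n p lam) '' ↑(UVComp p d) =
        ↑(SCompB n p lam (d • ∑ i, egen p i)) :=
  veronese_presentation_general n (Nat.le_of_succ_le hn) p (fun i => two_pos.trans_le (hp i)) lam
    hlam0 hlamd
end
end

section
/- Let r ≥ 2 and 1 ≤ a ≤ r−1 be integers with gcd(r,a) = 1. Let ε ∈ ℂ be a primitive r-th root of unity and let δ be the ℂ-algebra automorphism of the polynomial ring ℂ[X,Y] with δ(X) = εX and δ(Y) = ε^a Y. For t ∈ ℤ set S_t := {f ∈ ℂ[X,Y] : δ(f) = ε^t f}, so S_0 = ℂ[X,Y]^{⟨δ⟩} is the invariant ring and each S_t is an S_0-submodule of ℂ[X,Y]. Then for every integer 0 ≤ t ≤ r, Ext^1_{S_0}(S_t, S_0) = 0 (i.e., S_t is a special Cohen–Macaulay S_0-module) if and only if t ∈ I(r,a). -/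
set_option synthInstance.maxHeartbeats 1000000
set_option maxHeartbeats 1000000

noncomputable section

open MvPolynomial CategoryTheory

/-- The `i`-series of the Hirzebruch–Jung continued fraction expansion of `r/a`:
`i₀ = r`, `i₁ = a` and, as long as `i_t > 0`, `i_{t+1}` is the unique integer with
`0 ≤ i_{t+1} < i_t` and `i_{t+1} ≡ −i_{t−1} (mod i_t)` (after the sequence reaches `0`
it stays `0`). -/
def iSeq (r a : ℕ) : ℕ → ℕ
  | 0 => r
  | 1 => a
  | (t + 2) =>
      if iSeq r a (t + 1) = 0 then 0
      else (((-(iSeq r a t : ℤ)) % (iSeq r a (t + 1) : ℤ)).toNat)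

/-- `I(r,a)`: the set of all terms of the `i`-series of `r/a`. -/
def ISet (r a : ℕ) : Set ℕ := Set.range (iSeq r a)

/-!
Grade `K[X, Y]` by `ℤ/r` with weights `(1, a)`, so that `S_t` is the component of degree `t`, and
let `j ≥ 0` be least with `a * j ≡ t mod r`. The crux is that `Ext¹(S_t, S₀) = 0` if and only if
`S_t` is contained in the ideal `(X ^ t, Y ^ j)`.

If it is, then `X ^ t` and `Y ^ j` generate `S_t` over `S₀`, and comparing their relations with the
Koszul relations multiplied by `X ^ (r - t)` and `Y ^ (r - j)` shows that every linear map from the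
relations to `S₀` extends to `S₀ × S₀`. Conversely, if `Ext¹(S_t, S₀) = 0`, then an element
`m ∈ S_t` with `m * S_t ⊆ (X ^ t, Y ^ j)` lies in `(X ^ t, Y ^ j)` itself. This fails for
`m = X ^ (t - b) * Y ^ (j - c)` if `X ^ b * Y ^ c` is a monomial of `S_t` outside the ideal with
`b` least possible.

In terms of exponents, `S_t ⊆ (X ^ t, Y ^ j)` says that no `(b, c)` with `b < t` and `c < j`
satisfies `b + a * c ≡ t mod r`. The terms of the `i`-series are the successive minima of the first
coordinate among the points of the lattice `x ≡ a * c mod r`, and two consecutive minima span this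
lattice; hence the condition holds exactly when `t` is a term.
-/
section ExtOne

universe u

variable {R : Type u} [CommRing R]

/-- Vanishing of `Ext¹_R(M, N)`, for Mathlib's derived functor `Ext` on `R`-modules. -/
abbrev ExtOneVanishes (R M N : Type u) [CommRing R] [AddCommGroup M] [Module R M]
    [AddCommGroup N] [Module R N] : Prop :=
  Subsingleton (((Ext R (ModuleCat R) 1).obj
    (Opposite.op (ModuleCat.of R M))).obj (ModuleCat.of R N))

/-- Every linear map to `N` from the kernel of `q : F → M` extends to `F`. When `q` is a
projective presentation of `M`, this is the elementary form of `Ext¹_R(M, N) = 0`. -/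
def KerMapsExtend {F M : Type*} (N : Type*) [AddCommGroup F] [Module R F] [AddCommGroup M]
    [Module R M] [AddCommGroup N] [Module R N] (q : F →ₗ[R] M) : Prop :=
  ∀ φ : LinearMap.ker q →ₗ[R] N, ∃ ψ : F →ₗ[R] N, ∀ k : LinearMap.ker q, ψ k = φ k

section LinearAlgebra

variable {F P P₁ P₂ M N : Type*} [AddCommGroup F] [Module R F] [AddCommGroup P] [Module R P]
  [AddCommGroup P₁] [Module R P₁] [AddCommGroup P₂] [Module R P₂]
  [AddCommGroup M] [Module R M] [AddCommGroup N] [Module R N]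

lemma KerMapsExtend.of_lifts {q : F →ₗ[R] M} {π : P →ₗ[R] M} (h : KerMapsExtend N q)
    {u : F →ₗ[R] P} {s : P →ₗ[R] F} (hu : π ∘ₗ u = q) (hs : q ∘ₗ s = π) :
    KerMapsExtend N π := by
  intro φ
  have hu' (x : F) : π (u x) = q x := LinearMap.congr_fun hu x
  have hs' (x : P) : q (s x) = π x := LinearMap.congr_fun hs x
  let uKer : LinearMap.ker q →ₗ[R] LinearMap.ker π :=
    u.restrict fun x hx => by simpa only [LinearMap.mem_ker, hu'] using hx
  let defect : P →ₗ[R] LinearMap.ker π :=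
    (LinearMap.id - u ∘ₗ s).codRestrict _ fun x => by simp [hu', hs']
  obtain ⟨ψ, hψ⟩ := h (φ ∘ₗ uKer)
  refine ⟨ψ ∘ₗ s + φ ∘ₗ defect, fun k => ?_⟩
  have hsk : s k ∈ LinearMap.ker q := by rw [LinearMap.mem_ker, hs', k.2]
  have hsum : uKer ⟨s k, hsk⟩ + defect k = k := Subtype.ext (add_sub_cancel (u (s k)) (k : P))
  calc ψ (s k) + φ (defect k) = φ (uKer ⟨s k, hsk⟩) + φ (defect k) := by
        rw [← LinearMap.comp_apply φ uKer, ← hψ]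
    _ = φ k := by rw [← map_add, hsum]

lemma exists_comp_eq_of_ker_le_ker {q : F →ₗ[R] M} (hq : Function.Surjective q)
    {g : F →ₗ[R] N} (h : LinearMap.ker q ≤ LinearMap.ker g) :
    ∃ f : M →ₗ[R] N, f ∘ₗ q = g := by
  refine ⟨(LinearMap.ker q).liftQ g h ∘ₗ (q.quotKerEquivOfSurjective hq).symm, ?_⟩
  ext x
  have hx : (q.quotKerEquivOfSurjective hq).symm (q x) = (LinearMap.ker q).mkQ x :=
    (LinearEquiv.symm_apply_eq _).2 rfl
  simp [hx]

lemma kerMapsExtend_iff_of_exact {d₂ : P₂ →ₗ[R] P₁} {d₁ : P₁ →ₗ[R] P} {π : P →ₗ[R] M}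
    (h₂ : Function.Exact d₂ d₁) (h₁ : Function.Exact d₁ π) :
    KerMapsExtend N π ↔
      ∀ φ : P₁ →ₗ[R] N, φ ∘ₗ d₂ = 0 → ∃ ψ : P →ₗ[R] N, ψ ∘ₗ d₁ = φ := by
  let e : P₁ →ₗ[R] LinearMap.ker π := d₁.codRestrict _ h₁.apply_apply_eq_zero
  have he : Function.Surjective e := by
    rintro ⟨x, hx⟩
    obtain ⟨y, rfl⟩ := (h₁ x).1 hx
    exact ⟨y, rfl⟩
  constructor
  · intro h φ hφ
    have hker : LinearMap.ker e ≤ LinearMap.ker φ := by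
      intro x hx
      obtain ⟨y, rfl⟩ := (h₂ x).1 (congrArg Subtype.val hx)
      exact LinearMap.congr_fun hφ y
    obtain ⟨φ', rfl⟩ := exists_comp_eq_of_ker_le_ker he hker
    obtain ⟨ψ, hψ⟩ := h φ'
    exact ⟨ψ, LinearMap.ext fun y => hψ (e y)⟩
  · intro h φ
    have hcomp : (φ ∘ₗ e) ∘ₗ d₂ = 0 := by
      ext y
      have hy : e (d₂ y) = 0 := Subtype.ext (h₂.apply_apply_eq_zero y)
      simp [hy]
    obtain ⟨ψ, hψ⟩ := h (φ ∘ₗ e) hcomp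
    refine ⟨ψ, fun k => ?_⟩
    obtain ⟨y, rfl⟩ := he k
    exact LinearMap.congr_fun hψ y

end LinearAlgebra

variable {F M N : Type u} [AddCommGroup F] [Module R F] [AddCommGroup M] [Module R M]
  [AddCommGroup N] [Module R N]

lemma extOneVanishes_iff_forall_exists_comp_eq
    (P : ProjectiveResolution (ModuleCat.of R M)) :
    ExtOneVanishes R M N ↔ ∀ φ : P.complex.X 1 →ₗ[R] N, φ ∘ₗ (P.complex.d 2 1).hom = 0 →
      ∃ ψ : P.complex.X 0 →ₗ[R] N, ψ ∘ₗ (P.complex.d 1 0).hom = φ := by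
  rw [ExtOneVanishes, ← ModuleCat.isZero_iff_subsingleton,
    (P.isoExt (R := R) 1 (ModuleCat.of R N)).isZero_iff,
    ← HomologicalComplex.exactAt_iff_isZero_homology,
    HomologicalComplex.exactAt_iff' _ 0 1 2 (by simp) (by simp),
    ShortComplex.moduleCat_exact_iff]
  constructor
  · intro h φ hφ
    obtain ⟨ψ, hψ⟩ := h (ModuleCat.ofHom φ) (ModuleCat.hom_ext hφ)
    exact ⟨ModuleCat.Hom.hom ψ, congrArg ModuleCat.Hom.hom hψ⟩
  · intro h (φ : P.complex.X 1 ⟶ ModuleCat.of R N) hφ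
    obtain ⟨ψ, hψ⟩ := h φ.hom (congrArg ModuleCat.Hom.hom hφ)
    exact ⟨ModuleCat.ofHom ψ, ModuleCat.hom_ext hψ⟩

theorem extOneVanishes_iff_kerMapsExtend [Module.Projective R F] {q : F →ₗ[R] M}
    (hq : Function.Surjective q) : ExtOneVanishes R M N ↔ KerMapsExtend N q := by
  let P := projectiveResolution (ModuleCat.of R M)
  let π : P.complex.X 0 ⟶ ModuleCat.of R M := P.π.f 0
  have hπ : Function.Surjective π.hom :=
    (ModuleCat.epi_iff_surjective π).1 (inferInstanceAs (Epi (P.π.f 0)))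
  have : Module.Projective R (P.complex.X 0) :=
    (IsProjective.iff_projective _).2 (P.projective 0)
  obtain ⟨u, hu⟩ := Module.projective_lifting_property π.hom q hπ
  obtain ⟨s, hs⟩ := Module.projective_lifting_property q π.hom hq
  have h₂ := (ShortComplex.ShortExact.moduleCat_exact_iff_function_exact _).1 (P.exact_succ 0)
  have h₁ := (ShortComplex.ShortExact.moduleCat_exact_iff_function_exact _).1 P.exact₀
  rw [extOneVanishes_iff_forall_exists_comp_eq P, ← kerMapsExtend_iff_of_exact h₂ h₁]
  exact ⟨fun h => h.of_lifts hs hu, fun h => h.of_lifts hu hs⟩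

end ExtOne

section Graded

lemma apply_mul_apply_comm_of_ker_le_ker {R A F : Type*} [CommRing R] [CommRing A] [IsDomain A]
    [Algebra R A] [AddCommGroup F] [Module R F] {q G : F →ₗ[R] A}
    (hker : LinearMap.ker q ≤ LinearMap.ker G) {z : A} (hz : z ≠ 0)
    (hzq : ∀ f, z * q f ∈ (algebraMap R A).range) (f f' : F) : q f * G f' = q f' * G f := by
  obtain ⟨c, hc⟩ := hzq f
  obtain ⟨c', hc'⟩ := hzq f'
  have hmem : c • f' - c' • f ∈ LinearMap.ker q := by
    simp only [LinearMap.mem_ker, map_sub, map_smul, Algebra.smul_def, hc, hc']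
    ring
  have hG : z * q f * G f' - z * q f' * G f = 0 := by
    simpa only [LinearMap.mem_ker, map_sub, map_smul, Algebra.smul_def, hc, hc'] using hker hmem
  exact mul_left_cancel₀ hz (by linear_combination hG)

variable {ι k A : Type*} [AddLeftCancelMonoid ι] [DecidableEq ι] [CommRing k] [CommRing A]
  [Algebra k A] (𝒜 : ι → Submodule k A) [GradedAlgebra 𝒜]

lemma mem_of_mul_mem_add [IsDomain A] {i j : ι} {x f : A} (hx : x ∈ 𝒜 i) (hx0 : x ≠ 0)
    (h : x * f ∈ 𝒜 (i + j)) : f ∈ 𝒜 j := by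
  have hxf : x * (DirectSum.decompose 𝒜 f j : A) = x * f := by
    rw [← DirectSum.coe_decompose_mul_add_of_left_mem 𝒜 hx, DirectSum.decompose_of_mem_same 𝒜 h]
  rw [← mul_left_cancel₀ hx0 hxf]
  exact SetLike.coe_mem _

lemma exists_mem_mul_add_mul_eq {i j : ι} {x y f : A} (hx : x ∈ 𝒜 i) (hy : y ∈ 𝒜 i)
    (hf : f ∈ 𝒜 (i + j)) (h : f ∈ Ideal.span {x, y}) :
    ∃ u ∈ 𝒜 j, ∃ v ∈ 𝒜 j, x * u + y * v = f := by
  obtain ⟨u, v, huv⟩ := Ideal.mem_span_pair.1 h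
  refine ⟨DirectSum.decompose 𝒜 u j, SetLike.coe_mem _, DirectSum.decompose 𝒜 v j,
    SetLike.coe_mem _, ?_⟩
  rw [← DirectSum.coe_decompose_mul_add_of_left_mem 𝒜 hx,
    ← DirectSum.coe_decompose_mul_add_of_left_mem 𝒜 hy, ← DirectSum.decompose_of_mem_same 𝒜 hf,
    ← huv, mul_comm u, mul_comm v, DirectSum.decompose_add, DirectSum.add_apply,
    Submodule.coe_add]

end Graded

section Semiinvariants

universe u

variable {ι k : Type*} {A : Type u} [AddCommGroup ι] [DecidableEq ι] [CommRing k] [CommRing A]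
  [IsDomain A] [Algebra k A] {𝒜 : ι → Submodule k A} [GradedAlgebra 𝒜] {S₀ : Subalgebra k A}
  {t : ι} {M : Submodule S₀ A}

lemma exists_forall_fst_mul_eq (hS₀ : ∀ f, f ∈ S₀ ↔ f ∈ 𝒜 0) {x y x' y' : A}
    (hx : x ∈ 𝒜 t) (hy : y ∈ 𝒜 t) (hx' : x' ∈ 𝒜 (-t)) (hy' : y' ∈ 𝒜 (-t)) (hy0 : y ≠ 0)
    (hx'0 : x' ≠ 0) (hxy' : ∀ g, x' ∣ y' * g → x' ∣ g) {K : Submodule S₀ (S₀ × S₀)}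
    (hK : ∀ p : S₀ × S₀, p ∈ K ↔ (p.1 : A) * x + p.2 * y = 0) (φ : K →ₗ[S₀] S₀) :
    ∃ s ∈ 𝒜 t, ∀ p : K, (p.1.1 : A) * s = y * φ p := by
  let ofS₀ : S₀ →ₗ[S₀] A := Algebra.linearMap S₀ A
  let fst : K →ₗ[S₀] A := ofS₀ ∘ₗ LinearMap.fst S₀ S₀ S₀ ∘ₗ K.subtype
  have hker : LinearMap.ker fst ≤ LinearMap.ker (ofS₀ ∘ₗ φ) := by
    rintro ⟨⟨f, g⟩, hp⟩ hf
    have hf0 : (f : A) = 0 := hf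
    have hg0 : (g : A) = 0 := by simpa [hf0, hy0] using (hK _).1 hp
    have h0 : (⟨(f, g), hp⟩ : K) = 0 :=
      Subtype.ext (Prod.ext (Subtype.ext hf0) (Subtype.ext hg0))
    rw [h0]
    exact zero_mem _
  have hcomm (p p' : K) : (p.1.1 : A) * φ p' = p'.1.1 * φ p :=
    apply_mul_apply_comm_of_ker_le_ker hker one_ne_zero
      (fun p => ⟨p.1.1, (one_mul (p.1.1 : A)).symm⟩) p p'
  have mem_S₀ {b z : A} (hb : b ∈ 𝒜 t) (hz : z ∈ 𝒜 (-t)) : b * z ∈ S₀ := by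
    rw [hS₀, ← add_neg_cancel t]
    exact SetLike.mul_mem_graded hb hz
  -- The relation `y * z * x - x * z * y = 0`; comparing `z = x'` with `z = y'` makes the value of
  -- `φ` on the former divisible by `x'`, and the quotient is `s`.
  let koszul (z : A) (hz : z ∈ 𝒜 (-t)) : K :=
    ⟨(⟨y * z, mem_S₀ hy hz⟩, -⟨x * z, mem_S₀ hx hz⟩), (hK _).2 (by push_cast; ring)⟩
  have hdvd : x' * φ (koszul y' hy') = y' * φ (koszul x' hx') :=
    mul_left_cancel₀ hy0 (by linear_combination hcomm (koszul x' hx') (koszul y' hy'))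
  obtain ⟨s, hs⟩ := hxy' _ ⟨_, hdvd.symm⟩
  refine ⟨s, mem_of_mul_mem_add 𝒜 hx' hx'0 ?_, fun p => ?_⟩
  · rw [neg_add_cancel, ← hs]
    exact (hS₀ _).1 (Subtype.coe_prop _)
  · have hp : (p.1.1 : A) * φ (koszul x' hx') = y * x' * φ p := hcomm p (koszul x' hx')
    exact mul_left_cancel₀ hx'0 (by linear_combination hp - (p.1.1 : A) * hs)

theorem extOneVanishes_of_forall_mem_span (hS₀ : ∀ f, f ∈ S₀ ↔ f ∈ 𝒜 0)
    (hM : ∀ f, f ∈ M ↔ f ∈ 𝒜 t) {x y x' y' : A} (hx : x ∈ 𝒜 t) (hy : y ∈ 𝒜 t)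
    (hx' : x' ∈ 𝒜 (-t)) (hy' : y' ∈ 𝒜 (-t)) (hy0 : y ≠ 0) (hx'0 : x' ≠ 0)
    (hxy' : ∀ g, x' ∣ y' * g → x' ∣ g) (hspan : ∀ f ∈ 𝒜 t, f ∈ Ideal.span {x, y}) :
    ExtOneVanishes S₀ M S₀ := by
  have hspan' (f : A) (hf : f ∈ 𝒜 t) : ∃ u ∈ 𝒜 0, ∃ v ∈ 𝒜 0, x * u + y * v = f :=
    exists_mem_mul_add_mul_eq 𝒜 hx hy (by rwa [add_zero]) (hspan f hf)
  let q : S₀ × S₀ →ₗ[S₀] M :=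
    (LinearMap.toSpanSingleton S₀ M ⟨x, (hM x).2 hx⟩).coprod
      (LinearMap.toSpanSingleton S₀ M ⟨y, (hM y).2 hy⟩)
  have hq_apply (p : S₀ × S₀) : (q p : A) = p.1 * x + p.2 * y := rfl
  have hq : Function.Surjective q := by
    rintro ⟨f, hf⟩
    obtain ⟨u, hu, v, hv, huv⟩ := hspan' f ((hM f).1 hf)
    refine ⟨(⟨u, (hS₀ u).2 hu⟩, ⟨v, (hS₀ v).2 hv⟩), Subtype.ext ?_⟩
    calc u * x + v * y = x * u + y * v := by ring
      _ = f := huv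
  have hker (p : S₀ × S₀) : p ∈ LinearMap.ker q ↔ (p.1 : A) * x + p.2 * y = 0 := by
    rw [LinearMap.mem_ker, ← hq_apply, ZeroMemClass.coe_eq_zero]
  refine (extOneVanishes_iff_kerMapsExtend hq).2 fun φ => ?_
  obtain ⟨s, hs, hφ⟩ := exists_forall_fst_mul_eq hS₀ hx hy hx' hy' hy0 hx'0 hxy' hker φ
  obtain ⟨u, hu, v, hv, rfl⟩ := hspan' s hs
  refine ⟨(LinearMap.toSpanSingleton S₀ S₀ ⟨v, (hS₀ v).2 hv⟩).coprod
    (LinearMap.toSpanSingleton S₀ S₀ (-⟨u, (hS₀ u).2 hu⟩)), fun p => Subtype.ext ?_⟩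
  refine mul_left_cancel₀ hy0 (Eq.trans ?_ (hφ p))
  simp only [LinearMap.coprod_apply, LinearMap.toSpanSingleton_apply, smul_eq_mul]
  push_cast
  linear_combination -u * (hker p.1).1 p.2

section

variable {F : Type*} [AddCommGroup F] [Module S₀ F] {q : F →ₗ[S₀] M} {p p' : F →ₗ[S₀] A}
  {x y m : A}

-- On `ker q` the map `p'` is a multiple `-x * φ`, hence `p = y * φ`; an extension `ψ` of `φ` to `F`
-- corrects `(p, p')` to `(p - y * ψ, p' + x * ψ)`, which vanishes on `ker q`.
lemma exists_ker_le_ker_of_kerMapsExtend (hS₀ : ∀ f, f ∈ S₀ ↔ f ∈ 𝒜 0) (hx : x ∈ 𝒜 t)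
    (hx0 : x ≠ 0) (hxy : ∀ g, x ∣ y * g → x ∣ g) (hq : KerMapsExtend S₀ q)
    (hp' : ∀ f, p' f ∈ 𝒜 t) (hpp' : ∀ f, x * p f + y * p' f = m * q f) :
    ∃ G G' : F →ₗ[S₀] A, LinearMap.ker q ≤ LinearMap.ker G ∧
      LinearMap.ker q ≤ LinearMap.ker G' ∧ ∀ f, x * G f + y * G' f = m * q f := by
  let ofS₀ : S₀ →ₗ[S₀] A := Algebra.linearMap S₀ A
  let mulX : S₀ →ₗ[S₀] A := LinearMap.toSpanSingleton S₀ A x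
  have hmulX : Function.Injective mulX := fun c d hcd => Subtype.ext (mul_right_cancel₀ hx0 hcd)
  have hpp'_ker {f : F} (hf : f ∈ LinearMap.ker q) : x * p f + y * p' f = 0 := by
    rw [hpp', LinearMap.mem_ker.1 hf, ZeroMemClass.coe_zero, mul_zero]
  have hrange (f : LinearMap.ker q) : ∃ s, mulX s = (-p' ∘ₗ (LinearMap.ker q).subtype) f := by
    obtain ⟨s, hs⟩ := hxy (p' f) ⟨-p f, by linear_combination hpp'_ker f.2⟩
    have hs0 : -s ∈ S₀ := by
      refine (hS₀ _).2 (neg_mem (mem_of_mul_mem_add 𝒜 hx hx0 ?_))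
      rw [add_zero, ← hs]
      exact hp' f
    refine ⟨⟨-s, hs0⟩, ?_⟩
    change -s * x = -p' f
    rw [hs]
    ring
  obtain ⟨ψ, hψ⟩ := hq (LinearMap.codRestrictOfInjective _ mulX hmulX hrange)
  have hψ' {f : F} (hf : f ∈ LinearMap.ker q) : (ψ f : A) * x = -p' f := by
    rw [hψ ⟨f, hf⟩]
    exact LinearMap.codRestrictOfInjective_comp_apply _ mulX hmulX hrange ⟨f, hf⟩
  refine ⟨p - LinearMap.mulLeft S₀ y ∘ₗ ofS₀ ∘ₗ ψ, p' + LinearMap.mulLeft S₀ x ∘ₗ ofS₀ ∘ₗ ψ,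
    fun f hf => ?_, fun f hf => ?_, fun f => ?_⟩
  · refine mul_left_cancel₀ hx0 ?_
    change x * (p f - y * ψ f) = x * 0
    linear_combination hpp'_ker hf - y * hψ' hf
  · change p' f + x * ψ f = 0
    linear_combination hψ' hf
  · change x * (p f - y * ψ f) + y * (p' f + x * ψ f) = m * q f
    linear_combination hpp' f

lemma mem_span_pair_of_ker_le_ker (hS₀ : ∀ f, f ∈ S₀ ↔ f ∈ 𝒜 0) (hM : ∀ f, f ∈ M ↔ f ∈ 𝒜 t)
    (hx : x ∈ 𝒜 t) (hy : y ∈ 𝒜 t) (hx0 : x ≠ 0) {z : A} (hz : z ∈ 𝒜 (-t)) (hz0 : z ≠ 0)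
    (hxy : ∀ g, x ∣ y * g → x ∣ g) (hq : Function.Surjective q)
    {G G' : F →ₗ[S₀] A} (hG : LinearMap.ker q ≤ LinearMap.ker G)
    (hG' : LinearMap.ker q ≤ LinearMap.ker G') (h : ∀ f, x * G f + y * G' f = m * q f) :
    m ∈ Ideal.span {x, y} := by
  obtain ⟨e, he⟩ := hq ⟨x, (hM x).2 hx⟩
  obtain ⟨e', he'⟩ := hq ⟨y, (hM y).2 hy⟩
  have hdvd {H : F →ₗ[S₀] A} (hH : LinearMap.ker q ≤ LinearMap.ker H) : x ∣ H e := by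
    have hqH : LinearMap.ker (M.subtype ∘ₗ q) ≤ LinearMap.ker H := fun f hf =>
      hH (Subtype.ext hf)
    have hzq (f : F) : z * (M.subtype ∘ₗ q) f ∈ (algebraMap S₀ A).range := by
      refine ⟨⟨z * q f, (hS₀ _).2 ?_⟩, rfl⟩
      rw [← neg_add_cancel t]
      exact SetLike.mul_mem_graded hz ((hM _).1 (q f).2)
    have hcomm := apply_mul_apply_comm_of_ker_le_ker hqH hz0 hzq e e'
    simp only [LinearMap.comp_apply, he, he', Submodule.subtype_apply] at hcomm
    exact hxy _ ⟨_, hcomm.symm⟩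
  obtain ⟨u, hu⟩ := hdvd hG
  obtain ⟨v, hv⟩ := hdvd hG'
  refine Ideal.mem_span_pair.2 ⟨u, v, mul_left_cancel₀ hx0 ?_⟩
  have he_eq := h e
  rw [he, hu, hv] at he_eq
  linear_combination he_eq

end

theorem mem_span_pair_of_extOneVanishes (hS₀ : ∀ f, f ∈ S₀ ↔ f ∈ 𝒜 0)
    (hM : ∀ f, f ∈ M ↔ f ∈ 𝒜 t) {x y z m : A} (hx : x ∈ 𝒜 t) (hy : y ∈ 𝒜 t) (hx0 : x ≠ 0)
    (hz : z ∈ 𝒜 (-t)) (hz0 : z ≠ 0) (hxy : ∀ g, x ∣ y * g → x ∣ g)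
    (hExt : ExtOneVanishes S₀ M S₀) (hm : m ∈ 𝒜 t)
    (hmM : ∀ n ∈ 𝒜 t, m * n ∈ Ideal.span {x, y}) : m ∈ Ideal.span {x, y} := by
  let q : (M →₀ S₀) →ₗ[S₀] M := Finsupp.linearCombination S₀ id
  have hq : Function.Surjective q := Finsupp.linearCombination_id_surjective S₀ M
  have hcoeff (n : M) : ∃ c ∈ 𝒜 t, ∃ c' ∈ 𝒜 t, x * c + y * c' = m * n :=
    exists_mem_mul_add_mul_eq 𝒜 hx hy (SetLike.mul_mem_graded hm ((hM n).1 n.2))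
      (hmM n ((hM n).1 n.2))
  choose c _ c' hc' hcc' using hcoeff
  let p : (M →₀ S₀) →ₗ[S₀] A := Finsupp.linearCombination S₀ c
  let p' : (M →₀ S₀) →ₗ[S₀] A := Finsupp.linearCombination S₀ c'
  have hp' (f : M →₀ S₀) : p' f ∈ 𝒜 t := by
    rw [← hM]
    exact M.sum_mem fun n _ => M.smul_mem _ ((hM _).2 (hc' n))
  have hpp' : LinearMap.mulLeft S₀ x ∘ₗ p + LinearMap.mulLeft S₀ y ∘ₗ p' =
      LinearMap.mulLeft S₀ m ∘ₗ M.subtype ∘ₗ q :=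
    Finsupp.lhom_ext' fun n => LinearMap.ext_ring (by simp [p, p', q, hcc'])
  obtain ⟨G, G', hG, hG', h⟩ := exists_ker_le_ker_of_kerMapsExtend hS₀ hx hx0 hxy
    ((extOneVanishes_iff_kerMapsExtend hq).1 hExt) hp' (LinearMap.congr_fun hpp')
  exact mem_span_pair_of_ker_le_ker hS₀ hM hx hy hx0 hz hz0 hxy hq hG hG' h

end Semiinvariants

section ISeries

/-- Two lattice points `(i, j)` and `(i', j')` of `Λ = {(x, c) | x ≡ a * c mod r}`, with
`0 ≤ i' < i` and `0 ≤ j < j'`, that span `Λ`, a lattice of determinant `r`. Consecutive terms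
of the `i`-series are the first coordinates of such pairs. -/
structure IsAdjacentPair (r a : ℕ) (i j i' j' : ℤ) : Prop where
  fst_nonneg : 0 ≤ i'
  fst_lt : i' < i
  snd_nonneg : 0 ≤ j
  snd_lt : j < j'
  det_eq : i * j' - i' * j = r
  left_mem : (a : ZMod r) * j = i
  right_mem : (a : ZMod r) * j' = i'

namespace IsAdjacentPair

variable {r a : ℕ} {i j i' j' : ℤ}

lemma next (h : IsAdjacentPair r a i j i' j') {k : ℤ} (hk_nonneg : 0 ≤ k * i' - i)
    (hk_lt : k * i' - i < i') : IsAdjacentPair r a i' j' (k * i' - i) (k * j' - j) where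
  fst_nonneg := hk_nonneg
  fst_lt := hk_lt
  snd_nonneg := h.snd_nonneg.trans h.snd_lt.le
  snd_lt := by
    have hk : 1 < k := by nlinarith [h.fst_lt]
    nlinarith [h.snd_nonneg, h.snd_lt]
  det_eq := by linear_combination h.det_eq
  left_mem := h.right_mem
  right_mem := by
    push_cast
    linear_combination (k : ZMod r) * h.right_mem - h.left_mem

lemma pos (h : IsAdjacentPair r a i j i' j') : (0 : ℤ) < r := by
  rw [← h.det_eq, sub_pos]
  exact mul_lt_mul' h.fst_lt.le h.snd_lt h.snd_nonneg (h.fst_nonneg.trans_lt h.fst_lt)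

lemma exists_eq_mul_add_mul (h : IsAdjacentPair r a i j i' j') {x c : ℤ}
    (hx : (a : ZMod r) * c = x) : ∃ l b : ℤ, x = l * i + b * i' ∧ c = l * j + b * j' := by
  have hl : (r : ℤ) ∣ x * j' - c * i' := by
    rw [← ZMod.intCast_zmod_eq_zero_iff_dvd]
    push_cast
    linear_combination (c : ZMod r) * h.right_mem - (j' : ZMod r) * hx
  have hb : (r : ℤ) ∣ c * i - x * j := by
    rw [← ZMod.intCast_zmod_eq_zero_iff_dvd]
    push_cast
    linear_combination (j : ZMod r) * hx - (c : ZMod r) * h.left_mem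
  obtain ⟨l, hl⟩ := hl
  obtain ⟨b, hb⟩ := hb
  have hr : (r : ℤ) ≠ 0 := h.pos.ne'
  refine ⟨l, b, mul_left_cancel₀ hr ?_, mul_left_cancel₀ hr ?_⟩
  · linear_combination i * hl + i' * hb - x * h.det_eq
  · linear_combination j * hl + j' * hb - c * h.det_eq

lemma snd_le_of_mem (h : IsAdjacentPair r a i j i' j') {x c : ℤ}
    (hxc : (a : ZMod r) * c = x) (hx_nonneg : 0 ≤ x) (hx_lt : x < i) (hc : 0 < c) : j' ≤ c := by
  obtain ⟨l, b, rfl, rfl⟩ := h.exists_eq_mul_add_mul hxc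
  obtain ⟨hi', hi, hj, hj', -, -, -⟩ := h
  obtain hl | hl := le_or_gt l 0
  · have hbl : 1 ≤ b + l := by
      obtain rfl | hl := hl.eq_or_lt
      · nlinarith
      · nlinarith
    calc j' ≤ (b + l) * j' := le_mul_of_one_le_left (hj.trans hj'.le) hbl
      _ ≤ (b + l) * j' + -l * (j' - j) :=
        le_add_of_nonneg_right (mul_nonneg (neg_nonneg.2 hl) (sub_nonneg.2 hj'.le))
      _ = l * j + b * j' := by ring
  · have hb : b < 0 := by
      by_contra! hb
      nlinarith
    have hlb : l ≤ -b := by nlinarith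
    have hc_neg : l * j + b * j' < 0 :=
      calc l * j + b * j' ≤ -b * j + b * j' := by gcongr
        _ = b * (j' - j) := by ring
        _ < 0 := mul_neg_of_neg_of_pos hb (sub_pos.2 hj')
    exact absurd hc hc_neg.not_gt

end IsAdjacentPair

variable {r a : ℕ}

lemma iSeq_ne_zero_of_succ (ha : a < r) {n : ℕ} (h : iSeq r a (n + 1) ≠ 0) :
    iSeq r a n ≠ 0 :=
  match n with
  | 0 => Nat.ne_zero_of_lt ha
  | _ + 1 => fun hn => h (if_pos hn)

lemma iSeq_add_two_lt {n : ℕ} (h : iSeq r a (n + 1) ≠ 0) :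
    iSeq r a (n + 2) < iSeq r a (n + 1) := by
  have hpos : (0 : ℤ) < iSeq r a (n + 1) := by positivity
  rw [iSeq, if_neg h, Int.toNat_lt (Int.emod_nonneg _ hpos.ne')]
  exact Int.emod_lt_of_pos _ hpos

lemma exists_iSeq_add_two_eq {n : ℕ} (h : iSeq r a (n + 1) ≠ 0) :
    ∃ k : ℤ, (iSeq r a (n + 2) : ℤ) = k * iSeq r a (n + 1) - iSeq r a n := by
  have hpos : (0 : ℤ) < iSeq r a (n + 1) := by positivity
  refine ⟨-(-(iSeq r a n : ℤ) / iSeq r a (n + 1)), ?_⟩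
  rw [iSeq, if_neg h, Int.toNat_of_nonneg (Int.emod_nonneg _ hpos.ne'), Int.emod_def]
  ring

lemma iSeq_succ_lt (ha : a < r) {n : ℕ} (h : iSeq r a n ≠ 0) :
    iSeq r a (n + 1) < iSeq r a n :=
  match n with
  | 0 => ha
  | _ + 1 => iSeq_add_two_lt h

lemma exists_iSeq_eq_zero (ha : a < r) : ∃ n, iSeq r a n = 0 := by
  by_contra! h
  exact not_strictAnti_of_wellFoundedLT _ (strictAnti_nat_of_succ_lt fun n => iSeq_succ_lt ha (h n))

lemma exists_isAdjacentPair_iSeq (ha : a < r) {n : ℕ} (h : iSeq r a n ≠ 0) :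
    ∃ j j' : ℤ, IsAdjacentPair r a (iSeq r a n) j (iSeq r a (n + 1)) j' := by
  induction n with
  | zero => exact ⟨0, 1, by constructor <;> simp [iSeq, ha]⟩
  | succ n ih =>
    obtain ⟨j, j', hpair⟩ := ih (iSeq_ne_zero_of_succ ha h)
    obtain ⟨k, hk⟩ := exists_iSeq_add_two_eq h
    refine ⟨j', k * j' - j, ?_⟩
    rw [hk]
    refine hpair.next ?_ ?_
    · rw [← hk]
      positivity
    · rw [← hk]
      exact_mod_cast iSeq_add_two_lt h

lemma exists_least_mul_eq (hr : r ≠ 0) (har : a.Coprime r) (x : ZMod r) :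
    ∃ j < r, (a : ZMod r) * j = x ∧ ∀ c : ℕ, (a : ZMod r) * c = x → j ≤ c := by
  have : NeZero r := ⟨hr⟩
  have ha : (a : ZMod r) * (a : ZMod r)⁻¹ = 1 := ZMod.coe_mul_inv_eq_one a har
  refine ⟨((a : ZMod r)⁻¹ * x).val, ZMod.val_lt _, ?_, ?_⟩
  · rw [ZMod.natCast_zmod_val, ← mul_assoc, ha, one_mul]
  · rintro c rfl
    rw [← mul_assoc, mul_comm _ (a : ZMod r), ha, one_mul, ZMod.val_natCast]
    exact Nat.mod_le c r

section

variable {t j : ℕ}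

lemma le_or_le_of_mem_ISet (ha : a < r) (ht : t < r) (hj : (a : ZMod r) * j = t)
    (hj_min : ∀ c : ℕ, (a : ZMod r) * c = t → j ≤ c) (h : t ∈ ISet r a) {b c : ℕ}
    (hbc : (b + a * c : ZMod r) = t) : t ≤ b ∨ j ≤ c := by
  obtain ⟨n, rfl⟩ := h
  by_contra! hlt
  obtain ⟨hb, hc⟩ := hlt
  obtain ⟨m, rfl⟩ := Nat.exists_eq_succ_of_ne_zero (n := n) (by rintro rfl; exact ht.ne rfl)
  have hm : iSeq r a m ≠ 0 := iSeq_ne_zero_of_succ ha (Nat.ne_zero_of_lt hb)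
  obtain ⟨u, u', hpair⟩ := exists_isAdjacentPair_iSeq ha hm
  lift u' to ℕ using hpair.snd_nonneg.trans hpair.snd_lt.le
  have hju' : j ≤ u' := hj_min u' (by exact_mod_cast hpair.right_mem)
  have hmem : (a : ZMod r) * ((j - c : ℤ) : ZMod r) = ((b : ℤ) : ZMod r) := by
    push_cast
    linear_combination hj - hbc
  have hu' : (u' : ℤ) ≤ j - c := by
    refine hpair.snd_le_of_mem hmem (by positivity) ?_ (by lia)
    exact (Nat.cast_lt.2 hb).trans hpair.fst_lt
  obtain rfl : c = 0 := by lia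
  have hbt : (b : ZMod r) = (iSeq r a (m + 1) : ℕ) := by simpa using hbc
  exact hb.ne (CharP.natCast_injOn_Iio (ZMod r) r (hb.trans ht) ht hbt)

lemma mem_ISet_of_forall_le_or_le (ha : a < r) (ht : t < r) (hj : (a : ZMod r) * j = t)
    (h : ∀ b c : ℕ, (b + a * c : ZMod r) = t → t ≤ b ∨ j ≤ c) : t ∈ ISet r a := by
  have hex : ∃ n, iSeq r a n ≤ t := (exists_iSeq_eq_zero ha).imp fun n hn => hn.trans_le t.zero_le
  obtain ⟨m, hm⟩ := Nat.exists_eq_succ_of_ne_zero ((Nat.find_pos hex).2 ht.not_ge).ne'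
  have hle : iSeq r a (m + 1) ≤ t := by
    have hfind := Nat.find_spec hex
    rwa [hm] at hfind
  have hlt : t < iSeq r a m := not_le.1 (Nat.find_min hex (hm ▸ m.lt_succ_self))
  obtain ⟨u, u', hpair⟩ := exists_isAdjacentPair_iSeq ha (Nat.ne_zero_of_lt hlt)
  lift u' to ℕ using hpair.snd_nonneg.trans hpair.snd_lt.le
  obtain rfl | hj_pos := j.eq_zero_or_pos
  · obtain rfl : t = 0 :=
      CharP.natCast_injOn_Iio (ZMod r) r ht (ht.trans_le' t.zero_le) (by simpa using hj.symm)
    exact exists_iSeq_eq_zero ha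
  have hu'j : u' ≤ j := by
    have hle := hpair.snd_le_of_mem (x := t) (c := j) (by exact_mod_cast hj) (by positivity)
      (by exact_mod_cast hlt) (by exact_mod_cast hj_pos)
    exact_mod_cast hle
  have hmem : ((iSeq r a (m + 1) : ℕ) + a * ((j - u' : ℕ) : ZMod r) : ZMod r) = t := by
    have hright : (a : ZMod r) * u' = (iSeq r a (m + 1) : ℕ) := by
      exact_mod_cast hpair.right_mem
    rw [Nat.cast_sub hu'j]
    linear_combination hj - hright
  obtain hge | hge := h _ _ hmem
  · exact ⟨m + 1, hle.antisymm hge⟩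
  · have := hpair.snd_nonneg.trans_lt hpair.snd_lt
    lia

theorem mem_ISet_iff (ha : a < r) (ht : t < r) (hj : (a : ZMod r) * j = t)
    (hj_min : ∀ c : ℕ, (a : ZMod r) * c = t → j ≤ c) :
    t ∈ ISet r a ↔ ∀ b c : ℕ, (b + a * c : ZMod r) = t → t ≤ b ∨ j ≤ c :=
  ⟨fun h _ _ => le_or_le_of_mem_ISet ha ht hj hj_min h, mem_ISet_of_forall_le_or_le ha ht hj⟩

end

end ISeries

section Polynomial

section

variable {K σ : Type*} [CommRing K]

lemma X_pow_dvd_of_dvd_X_pow_mul [IsDomain K] {i k : σ} (hik : i ≠ k) {m n : ℕ}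
    {g : MvPolynomial σ K} (h : X i ^ m ∣ X k ^ n * g) : X i ^ m ∣ g :=
  X_prime.pow_dvd_of_dvd_mul_left m
    (fun hdvd => hik (X_dvd_X.1 (X_prime.dvd_of_dvd_pow hdvd))) h

lemma mem_span_X_pow_pair_iff {i k : σ} {m n : ℕ} {f : MvPolynomial σ K} :
    f ∈ Ideal.span {X i ^ m, X k ^ n} ↔ ∀ d ∈ f.support, m ≤ d i ∨ n ≤ d k := by
  have himage : ({X i ^ m, X k ^ n} : Set (MvPolynomial σ K)) =
      (fun d => monomial d 1) '' {Finsupp.single i m, Finsupp.single k n} := by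
    simp only [Set.image_pair, X_pow_eq_monomial]
  rw [himage, mem_ideal_span_monomial_image]
  simp only [Set.mem_insert_iff, Set.mem_singleton_iff, exists_eq_or_imp, exists_eq_left,
    Finsupp.single_le_iff]

lemma monomial_mul_mem_span_X_pow_pair {i k : σ} {m n : ℕ} {e : σ →₀ ℕ} {f : MvPolynomial σ K}
    (h : ∀ d ∈ f.support, m ≤ e i + d i ∨ n ≤ e k + d k) (z : K) :
    monomial e z * f ∈ Ideal.span {X i ^ m, X k ^ n} := by
  classical
  refine mem_span_X_pow_pair_iff.2 fun d' hd' => ?_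
  obtain ⟨e', he', d, hd, rfl⟩ := Finset.mem_add.1 (support_mul _ _ hd')
  obtain rfl := Finset.mem_singleton.1 (support_monomial_subset he')
  exact h d hd

lemma coeff_algHom_of_forall_X {e : σ → ℕ} {ε : K} {δ : MvPolynomial σ K →ₐ[K] MvPolynomial σ K}
    (hδ : ∀ i, δ (X i) = ε ^ e i • X i) (d : σ →₀ ℕ) (f : MvPolynomial σ K) :
    coeff d (δ f) = ε ^ Finsupp.weight e d * coeff d f := by
  classical
  have hmonomial (d' : σ →₀ ℕ) (z : K) :
      δ (monomial d' z) = ε ^ Finsupp.weight e d' • monomial d' z := by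
    calc δ (monomial d' z) = C z * d'.prod fun i n => (ε ^ e i • X i) ^ n := by
          rw [monomial_eq, map_mul, map_finsuppProd, ← algebraMap_eq, δ.commutes]
          simp only [map_pow, hδ]
      _ = ε ^ Finsupp.weight e d' • monomial d' z := by
          simp only [smul_pow, ← pow_mul, Finsupp.weight_apply, monomial_eq, smul_eq_mul,
            Finsupp.prod, Finsupp.sum, Finset.prod_smul, Finset.prod_pow_eq_pow_sum,
            mul_smul_comm, mul_comm (e _)]
  induction f using MvPolynomial.induction_on' with
  | monomial d' z =>
    rw [hmonomial, coeff_smul, coeff_monomial, smul_eq_mul]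
    split_ifs with h
    · rw [h]
    · rw [mul_zero, mul_zero]
  | add p q hp hq => rw [map_add, coeff_add, coeff_add, hp, hq, mul_add]

lemma map_eq_pow_smul_iff_isWeightedHomogeneous [IsDomain K] {r : ℕ} (hr : r ≠ 0) {e : σ → ℕ}
    {ε : K} (hε : IsPrimitiveRoot ε r) {δ : MvPolynomial σ K →ₐ[K] MvPolynomial σ K}
    (hδ : ∀ i, δ (X i) = ε ^ e i • X i) (t : ℕ) (f : MvPolynomial σ K) :
    δ f = ε ^ t • f ↔ IsWeightedHomogeneous (fun i => (e i : ZMod r)) f (t : ZMod r) := by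
  have hweight (d : σ →₀ ℕ) :
      Finsupp.weight (fun i => (e i : ZMod r)) d = (Finsupp.weight e d : ℕ) := by
    simp [Finsupp.weight_apply, Finsupp.sum]
  have hpow (m n : ℕ) : ε ^ m = ε ^ n ↔ (m : ZMod r) = n := by
    rw [(hε.isOfFinOrder hr).pow_eq_pow_iff_modEq, ← hε.eq_orderOf, ZMod.natCast_eq_natCast_iff]
  simp only [MvPolynomial.ext_iff, coeff_algHom_of_forall_X hδ, coeff_smul, smul_eq_mul,
    mul_eq_mul_right_iff, hpow, IsWeightedHomogeneous, hweight, or_iff_not_imp_right, ne_eq]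

end

/-- The weights `(1, a)` of the action of type `(1/r)(1, a)`: `X` has degree `1` and `Y` has
degree `a` in `ℤ/r`, and the semi-invariants `S_t` are the polynomials of degree `t`. -/
def cyclicWeight (r a : ℕ) (i : Fin 2) : ZMod r := (![1, a] i : ℕ)

lemma weight_cyclicWeight (r a : ℕ) (d : Fin 2 →₀ ℕ) :
    Finsupp.weight (cyclicWeight r a) d = d 0 + a * d 1 := by
  simp [Finsupp.weight_apply, Finsupp.sum_fintype, cyclicWeight, mul_comm]

variable {K : Type*} [CommRing K]

lemma isWeightedHomogeneous_X_zero_pow {r a m : ℕ} {t : ZMod r} (h : m = t) :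
    IsWeightedHomogeneous (cyclicWeight r a) (X 0 ^ m : MvPolynomial (Fin 2) K) t := by
  rw [X_pow_eq_monomial]
  exact isWeightedHomogeneous_monomial _ _ _ (by simpa [weight_cyclicWeight] using h)

lemma isWeightedHomogeneous_X_one_pow {r a n : ℕ} {t : ZMod r} (h : (a : ZMod r) * n = t) :
    IsWeightedHomogeneous (cyclicWeight r a) (X 1 ^ n : MvPolynomial (Fin 2) K) t := by
  rw [X_pow_eq_monomial]
  exact isWeightedHomogeneous_monomial _ _ _ (by simpa [weight_cyclicWeight] using h)

lemma map_eq_pow_smul_iff_isWeightedHomogeneous_cyclicWeight [IsDomain K] {r a : ℕ} (hr : r ≠ 0)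
    {ε : K} (hε : IsPrimitiveRoot ε r)
    {δ : MvPolynomial (Fin 2) K →ₐ[K] MvPolynomial (Fin 2) K}
    (hδ0 : δ (X 0) = ε • X 0) (hδ1 : δ (X 1) = ε ^ a • X 1)
    (t : ℕ) (f : MvPolynomial (Fin 2) K) :
    δ f = ε ^ t • f ↔ IsWeightedHomogeneous (cyclicWeight r a) f (t : ZMod r) :=
  map_eq_pow_smul_iff_isWeightedHomogeneous hr hε
    (Fin.forall_fin_two.2 ⟨hδ0.trans (by simp), hδ1⟩) t f

variable [IsDomain K] {r a t j : ℕ} {S₀ : Subalgebra K (MvPolynomial (Fin 2) K)}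
  {M : Submodule S₀ (MvPolynomial (Fin 2) K)}

lemma extOneVanishes_of_forall_le_or_le
    (hS₀ : ∀ f, f ∈ S₀ ↔ IsWeightedHomogeneous (cyclicWeight r a) f 0)
    (hM : ∀ f, f ∈ M ↔ IsWeightedHomogeneous (cyclicWeight r a) f (t : ZMod r))
    (ht : t ≤ r) (hjr : j ≤ r) (hj : (a : ZMod r) * j = t)
    (h : ∀ b c : ℕ, (b + a * c : ZMod r) = t → t ≤ b ∨ j ≤ c) : ExtOneVanishes S₀ M S₀ := by
  let := weightedGradedAlgebra K (cyclicWeight r a)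
  refine extOneVanishes_of_forall_mem_span (𝒜 := weightedHomogeneousSubmodule K (cyclicWeight r a))
    (x := X 0 ^ t) (y := X 1 ^ j) (x' := X 0 ^ (r - t)) (y' := X 1 ^ (r - j)) hS₀ hM
    (isWeightedHomogeneous_X_zero_pow rfl) (isWeightedHomogeneous_X_one_pow hj)
    (isWeightedHomogeneous_X_zero_pow ?_) (isWeightedHomogeneous_X_one_pow ?_)
    (pow_ne_zero _ (X_ne_zero _)) (pow_ne_zero _ (X_ne_zero _))
    (fun g => X_pow_dvd_of_dvd_X_pow_mul zero_ne_one) fun f hf => ?_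
  · simp [ht]
  · simp [hjr, hj]
  · refine mem_span_X_pow_pair_iff.2 fun d hd => h _ _ ?_
    rw [← weight_cyclicWeight]
    exact hf (mem_support_iff.1 hd)

lemma forall_le_or_le_of_extOneVanishes
    (hS₀ : ∀ f, f ∈ S₀ ↔ IsWeightedHomogeneous (cyclicWeight r a) f 0)
    (hM : ∀ f, f ∈ M ↔ IsWeightedHomogeneous (cyclicWeight r a) f (t : ZMod r))
    (ht : t < r) (hj : (a : ZMod r) * j = t) (hj_min : ∀ c : ℕ, (a : ZMod r) * c = t → j ≤ c)
    (hExt : ExtOneVanishes S₀ M S₀) (b c : ℕ) (hbc : (b + a * c : ZMod r) = t) :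
    t ≤ b ∨ j ≤ c := by
  let := weightedGradedAlgebra K (cyclicWeight r a)
  induction b using Nat.strong_induction_on generalizing c with | _ b ih => ?_
  by_contra! hlt
  obtain ⟨hb, hc⟩ := hlt
  have hb_pos : b ≠ 0 := by
    rintro rfl
    exact (hj_min c (by simpa using hbc)).not_gt hc
  have hc_pos : c ≠ 0 := by
    rintro rfl
    have hbt : (b : ZMod r) = t := by simpa using hbc
    exact hb.ne (CharP.natCast_injOn_Iio (ZMod r) r (hb.trans ht) ht hbt)
  let e : Fin 2 →₀ ℕ := Finsupp.single 0 (t - b) + Finsupp.single 1 (j - c)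
  have he0 : e 0 = t - b := by simp [e]
  have he1 : e 1 = j - c := by simp [e]
  have he : Finsupp.weight (cyclicWeight r a) e = t := by
    rw [weight_cyclicWeight, he0, he1, Nat.cast_sub hb.le, Nat.cast_sub hc.le]
    linear_combination hj - hbc
  have hmem : monomial e (1 : K) ∈ Ideal.span {X 0 ^ t, X 1 ^ j} := by
    refine mem_span_pair_of_extOneVanishes
      (𝒜 := weightedHomogeneousSubmodule K (cyclicWeight r a)) (z := X 0 ^ (r - t)) hS₀ hM
      (isWeightedHomogeneous_X_zero_pow rfl) (isWeightedHomogeneous_X_one_pow hj)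
      (pow_ne_zero _ (X_ne_zero _)) (isWeightedHomogeneous_X_zero_pow ?_)
      (pow_ne_zero _ (X_ne_zero _)) (fun g => X_pow_dvd_of_dvd_X_pow_mul zero_ne_one) hExt
      (isWeightedHomogeneous_monomial _ _ _ he) fun n hn => ?_
    · simp [ht.le]
    · refine monomial_mul_mem_span_X_pow_pair (fun d hd => ?_) 1
      have hd_weight : (d 0 + a * d 1 : ZMod r) = t := by
        rw [← weight_cyclicWeight]
        exact hn (mem_support_iff.1 hd)
      have hd_ih (hdb : d 0 < b) : t ≤ d 0 ∨ j ≤ d 1 := ih _ hdb _ hd_weight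
      lia
  have := mem_span_X_pow_pair_iff.1 hmem e (by simp)
  lia

theorem special_semiinvariants_iff_iSeries_general (ha : a < r) (hra : r.Coprime a) (ht : t ≤ r)
    (hS₀ : ∀ f, f ∈ S₀ ↔ IsWeightedHomogeneous (cyclicWeight r a) f 0)
    (hM : ∀ f, f ∈ M ↔ IsWeightedHomogeneous (cyclicWeight r a) f (t : ZMod r)) :
    ExtOneVanishes S₀ M S₀ ↔ t ∈ ISet r a := by
  obtain rfl | htr := ht.eq_or_lt
  · exact iff_of_true (extOneVanishes_of_forall_le_or_le (j := 0) hS₀ hM le_rfl (Nat.zero_le _)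
      (by simp) fun _ c _ => .inr (Nat.zero_le c)) ⟨0, rfl⟩
  obtain ⟨j, hjr, hj, hj_min⟩ := exists_least_mul_eq (Nat.ne_zero_of_lt ha) hra.symm (t : ZMod r)
  rw [mem_ISet_iff ha htr hj hj_min]
  exact ⟨fun h => forall_le_or_le_of_extOneVanishes hS₀ hM htr hj hj_min h,
    extOneVanishes_of_forall_le_or_le hS₀ hM ht hjr.le hj⟩

end Polynomial

/-- For the cyclic quotient singularity `(1/r)(1,a)` with
`gcd(r,a) = 1`, a module of semi-invariants `S_t` (`0 ≤ t ≤ r`) satisfies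
`Ext¹_{S₀}(S_t, S₀) = 0` if and only if `t ∈ I(r,a)`. -/
theorem special_semiinvariants_iff_iSeries (r a : ℕ) (hr : 2 ≤ r) (ha1 : 1 ≤ a)
    (ha2 : a ≤ r - 1) (hgcd : Nat.gcd r a = 1)
    (ε : ℂ) (hε : IsPrimitiveRoot ε r)
    (δ : MvPolynomial (Fin 2) ℂ ≃ₐ[ℂ] MvPolynomial (Fin 2) ℂ)
    (hδ0 : δ (X 0) = ε • X 0) (hδ1 : δ (X 1) = ε ^ a • X 1)
    (S0 : Subalgebra ℂ (MvPolynomial (Fin 2) ℂ))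
    (hS0 : ∀ f : MvPolynomial (Fin 2) ℂ, f ∈ S0 ↔ δ f = f)
    (t : ℕ) (ht : t ≤ r)
    (St : Submodule ↥S0 (MvPolynomial (Fin 2) ℂ))
    (hSt : ∀ f : MvPolynomial (Fin 2) ℂ, f ∈ St ↔ δ f = ε ^ t • f) :
    Subsingleton (((Ext ↥S0 (ModuleCat ↥S0) 1).obj
        (Opposite.op (ModuleCat.of ↥S0 ↥St))).obj (ModuleCat.of ↥S0 ↥S0)) ↔
      t ∈ ISet r a := by
  have hδ := map_eq_pow_smul_iff_isWeightedHomogeneous_cyclicWeight (by lia) hε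
    (δ := (δ : MvPolynomial (Fin 2) ℂ →ₐ[ℂ] MvPolynomial (Fin 2) ℂ)) hδ0 hδ1
  exact special_semiinvariants_iff_iSeries_general (by lia) hgcd ht
    (fun f => by simpa [hS0] using hδ 0 f) fun f => (hSt f).trans (hδ t f)
end
end
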